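/- arXiv:1602.08937 — 2 statements merged into one kernel-verified Lean document; each statement's English description precedes it below -/
import Mathlib

section
/- Let q ∈ ℂ with 0.2078750206 ≤ |q| ≤ 1/2 and let s ∈ ℕ, s ≥ 1, be such that the circle C(μ_s, 1/4) about μ_s := -q^{-s} of radius 1/4 is contained in {x ∈ ℂ : |x| > 8^11}. Then at every point x of this circle one has |Θ*(q,x)| > 1 > |G(q,x)|, where Θ*(q,x) := Σ_{j=-∞}^{∞} q^{j(j+1)/2} x^j and G(q,x) := Σ_{j=-∞}^{-1} q^{j(j+1)/2} x^j; consequently, by Rouché's theorem, the partial theta function θ(q,·) = Θ*(q,·) - G(q,·) has exactly one zero, a simple one, in the open disk D(μ_s, 1/4). -/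
open Metric Filter Topology

lemma aux_unique {φ : ℂ → ℂ} (hφ : Differentiable ℂ φ) {c : ℂ} {R ε B m : ℝ} (hR : 0 < R)
    (hε : 0 < ε) (hεR : ε ≤ R / 4) (hB : ∀ y ∈ closedBall c R, ‖φ y‖ ≤ B)
    (hsph : ∀ y ∈ sphere c ε, m * ε ≤ ‖φ y - φ c‖) (h0 : ‖φ c‖ < m * ε / 2)
    (hsmall : 16 * B * ε / R ^ 2 < m) :
    ∃ z ∈ ball c ε, φ z = 0 ∧ deriv φ z ≠ 0 ∧ ∀ w ∈ ball c ε, φ w = 0 → w = z := by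
  have h1 : ∀ y ∈ closedBall c (R / 2), ‖deriv φ y‖ ≤ B / (R / 2) := by
    intro y hy
    refine Complex.norm_deriv_le_of_forall_mem_sphere_norm_le (by positivity)
      hφ.diffContOnCl fun z hz => hB z ?_
    rw [mem_closedBall] at *
    rw [mem_sphere] at hz
    linarith [dist_triangle z y c]
  have hφ' : Differentiable ℂ (deriv φ) := hφ.deriv
  have h2 : ∀ y ∈ closedBall c (R / 4), ‖deriv (deriv φ) y‖ ≤ B / (R / 2) / (R / 4) := by
    intro y hy
    refine Complex.norm_deriv_le_of_forall_mem_sphere_norm_le (by positivity)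
      hφ'.diffContOnCl fun z hz => h1 z ?_
    rw [mem_closedBall] at *
    rw [mem_sphere] at hz
    linarith [dist_triangle z y c]
  have hB0 : 0 ≤ B := (norm_nonneg _).trans (hB c (mem_closedBall_self hR.le))
  set δ := B / (R / 2) / (R / 4) * ε with hδ
  have hδ0 : 0 ≤ δ := by positivity
  have hδm : 2 * δ < m := by
    have : 2 * δ = 16 * B * ε / R ^ 2 := by rw [hδ]; field_simp; ring
    linarith
  have hcc : c ∈ closedBall c ε := mem_closedBall_self hε.le
  have h3 : ∀ y ∈ closedBall c ε, ‖deriv φ y - deriv φ c‖ ≤ δ := by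
    intro y hy
    have := Convex.norm_image_sub_le_of_norm_deriv_le (f := deriv φ) (s := closedBall c ε)
      (x := c) (y := y) (C := B / (R / 2) / (R / 4)) (fun x _ => hφ' x)
      (fun x hx => h2 x (closedBall_subset_closedBall hεR hx)) (convex_closedBall c ε) hcc hy
    refine this.trans ?_
    rw [hδ]
    gcongr
    simpa [dist_eq_norm] using hy
  have h4 : ∀ x ∈ closedBall c ε, ∀ y ∈ closedBall c ε,
      ‖φ y - φ x - deriv φ c * (y - x)‖ ≤ δ * ‖y - x‖ := by
    intro x hx y hy
    have hd : ∀ x, HasDerivAt (fun x => φ x - deriv φ c * x) (deriv φ x - deriv φ c) x := by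
      intro x
      have h := (hφ x).hasDerivAt.fun_sub ((hasDerivAt_id x).const_mul (deriv φ c))
      rw [mul_one] at h
      exact h
    have := Convex.norm_image_sub_le_of_norm_hasDerivWithin_le (s := closedBall c ε)
      (x := x) (y := y) (C := δ) (fun x _ => (hd x).hasDerivWithinAt) h3
      (convex_closedBall c ε) hx hy
    have e : φ y - φ x - deriv φ c * (y - x) = φ y - deriv φ c * y - (φ x - deriv φ c * x) := by
      ring
    rw [e]
    exact this
  have hL : δ < ‖deriv φ c‖ := by
    have hy : c + (ε : ℂ) ∈ sphere c ε := by simp [abs_of_pos hε]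
    have ha := hsph _ hy
    have hb := h4 c hcc _ (sphere_subset_closedBall hy)
    have hn : ‖(ε : ℂ)‖ = ε := by simp [abs_of_pos hε]
    rw [add_sub_cancel_left, hn] at hb
    have : ‖φ (c + ε) - φ c‖ ≤ δ * ε + ‖deriv φ c‖ * ε := by
      calc ‖φ (c + ε) - φ c‖ = ‖(φ (c + ε) - φ c - deriv φ c * ε) + deriv φ c * ε‖ := by ring_nf
        _ ≤ _ := norm_add_le _ _
        _ ≤ _ := by rw [norm_mul, hn]; linarith
    have : m * ε ≤ (δ + ‖deriv φ c‖) * ε := by linarith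
    have := le_of_mul_le_mul_right this hε
    linarith
  have hfreq : ∃ᶠ z in 𝓝 c, φ z ≠ φ c := by
    intro h
    have h' : φ =ᶠ[𝓝 c] fun _ => φ c := by
      filter_upwards [h] with z hz
      simpa using hz
    have := h'.deriv_eq
    simp only [deriv_const] at this
    rw [this, norm_zero] at hL
    linarith
  have himg := DiffContOnCl.ball_subset_image_closedBall (hφ.diffContOnCl (s := ball c ε)) hε
    hsph hfreq
  obtain ⟨z, hz, hz0⟩ := himg (show (0 : ℂ) ∈ ball (φ c) (m * ε / 2) by
    simpa [dist_eq_norm] using h0)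
  have hzb : z ∈ ball c ε := by
    rw [mem_ball]
    refine lt_of_le_of_ne hz fun h => ?_
    have := hsph z h
    rw [hz0, zero_sub, norm_neg] at this
    have := norm_nonneg (φ c)
    linarith
  refine ⟨z, hzb, hz0, ?_, ?_⟩
  · intro h
    have := h3 z hz
    rw [h, zero_sub, norm_neg] at this
    linarith
  · intro w hw hw0
    by_contra hne
    have := h4 z hz w (ball_subset_closedBall hw)
    rw [hw0, hz0, sub_zero, zero_sub, norm_neg, norm_mul] at this
    have hp : 0 < ‖w - z‖ := norm_pos_iff.2 (sub_ne_zero.2 hne)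
    have := le_of_mul_le_mul_right this hp
    linarith

lemma prod_lower {u : ℕ → ℂ} (hu : ∀ n, ‖u n‖ ≤ 1.01 * (1 / 2 : ℝ) ^ (n + 1)) (N : ℕ) :
    (0.24 : ℝ) ≤ ‖∏ n ∈ Finset.range N, (1 - u n)‖ := by
  rcases N with _ | N
  · norm_num
  have key : ∀ N : ℕ, 0.24 * (1 + 2.1 * (1 / 2 : ℝ) ^ (N + 1)) ≤
      ‖∏ n ∈ Finset.range (N + 1), (1 - u n)‖ := by
    intro N
    have h1 : ∀ n, 1 - 1.01 * (1 / 2 : ℝ) ^ (n + 1) ≤ ‖1 - u n‖ := by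
      intro n
      have := norm_sub_norm_le (1 : ℂ) (u n)
      rw [norm_one] at this
      linarith [hu n]
    induction N with
    | zero =>
      have := h1 0
      norm_num at this ⊢
      linarith
    | succ N ih =>
      rw [Finset.prod_range_succ, norm_mul]
      have hv : (1 / 2 : ℝ) ^ (N + 1) ≤ 1 / 2 := by
        rw [pow_succ]
        have : (1 / 2 : ℝ) ^ N ≤ 1 := pow_le_one₀ (by norm_num) (by norm_num)
        linarith
      have hv0 : 0 < (1 / 2 : ℝ) ^ (N + 1) := by positivity
      have h2 := h1 (N + 1)
      rw [pow_succ] at h2 ⊢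
      set v := (1 / 2 : ℝ) ^ (N + 1)
      have h3 : 0 ≤ 1 - 1.01 * (v * (1 / 2)) := by linarith
      refine le_trans ?_ (mul_le_mul ih h2 h3 (norm_nonneg _))
      nlinarith [mul_nonneg hv0.le (sub_nonneg.2 hv)]
  refine le_trans ?_ (key N)
  have : (0 : ℝ) ≤ (1 / 2 : ℝ) ^ (N + 1) := by positivity
  linarith

noncomputable def qP (q : ℂ) (n : ℕ) : ℂ := ∏ i ∈ Finset.range n, (1 - q ^ (i + 1))

lemma qP_succ (q : ℂ) (n : ℕ) : qP q (n + 1) = qP q n * (1 - q ^ (n + 1)) :=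
  Finset.prod_range_succ _ _

lemma qnorm_pow_le {q : ℂ} (hq : ‖q‖ ≤ 1 / 2) (n : ℕ) : ‖q ^ n‖ ≤ (1 / 2 : ℝ) ^ n := by
  rw [norm_pow]; gcongr

lemma qP_lower {q : ℂ} (hq : ‖q‖ ≤ 1 / 2) (n : ℕ) : (0.24 : ℝ) ≤ ‖qP q n‖ := by
  apply prod_lower
  intro n
  have := qnorm_pow_le hq (n + 1)
  have h : (0 : ℝ) ≤ (1 / 2 : ℝ) ^ (n + 1) := by positivity
  linarith

lemma qP_ne {q : ℂ} (hq : ‖q‖ ≤ 1 / 2) (n : ℕ) : qP q n ≠ 0 := by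
  have := qP_lower hq n
  intro h
  rw [h, norm_zero] at this
  norm_num at this

lemma qP_upper {q : ℂ} (hq : ‖q‖ ≤ 1 / 2) (n : ℕ) : ‖qP q n‖ ≤ 3 := by
  rcases n with _ | n
  · simp [qP]
  have h1 : ∀ n : ℕ, ‖1 - q ^ (n + 1)‖ ≤ 1 + (1 / 2 : ℝ) ^ (n + 1) := by
    intro n
    refine (norm_sub_le _ _).trans ?_
    rw [norm_one]
    linarith [qnorm_pow_le hq (n + 1)]
  have key : ‖qP q (n + 1)‖ ≤ 3 - 3 * (1 / 2 : ℝ) ^ (n + 1) := by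
    induction n with
    | zero =>
      have := h1 0
      simp only [qP, Finset.prod_range_succ, Finset.prod_range_zero, one_mul]
      norm_num at this ⊢
      linarith
    | succ n ih =>
      rw [qP_succ, norm_mul]
      have h2 := h1 (n + 1)
      have hv0 : 0 < (1 / 2 : ℝ) ^ (n + 1) := by positivity
      rw [pow_succ (1 / 2 : ℝ)] at h2 ⊢
      set v := (1 / 2 : ℝ) ^ (n + 1)
      refine (mul_le_mul ih h2 (norm_nonneg _) ((norm_nonneg _).trans ih)).trans ?_
      nlinarith
  have h : (0 : ℝ) ≤ (1 / 2 : ℝ) ^ (n + 1) := by positivity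
  linarith

lemma qP_tendsto {q : ℂ} (hq : ‖q‖ ≤ 1 / 2) : ∃ P : ℂ, P ≠ 0 ∧ Tendsto (qP q) atTop (𝓝 P) := by
  have hc : CauchySeq (qP q) := by
    refine cauchySeq_of_le_geometric (1 / 2) (3 / 2) (by norm_num) fun n => ?_
    rw [qP_succ, dist_eq_norm]
    have : qP q n - qP q n * (1 - q ^ (n + 1)) = qP q n * q ^ (n + 1) := by ring
    rw [this, norm_mul]
    refine (mul_le_mul (qP_upper hq n) (qnorm_pow_le hq (n + 1)) (norm_nonneg _)
      (by norm_num)).trans ?_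
    rw [pow_succ]
    linarith
  obtain ⟨P, hP⟩ := cauchySeq_tendsto_of_complete hc
  refine ⟨P, ?_, hP⟩
  have := ge_of_tendsto' hP.norm (qP_lower hq)
  intro h
  rw [h, norm_zero] at this
  norm_num at this

noncomputable def gb (q : ℂ) : ℕ → ℕ → ℂ
  | _, 0 => 1
  | 0, _ + 1 => 0
  | M + 1, j + 1 => gb q M (j + 1) + q ^ (M - j) * gb q M j

lemma gb_zero_right (q : ℂ) (M : ℕ) : gb q M 0 = 1 := by cases M <;> simp [gb]

lemma gb_succ (q : ℂ) (M j : ℕ) :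
    gb q (M + 1) (j + 1) = gb q M (j + 1) + q ^ (M - j) * gb q M j := by simp [gb]

lemma gb_eq_zero (q : ℂ) (M : ℕ) : ∀ j, M < j → gb q M j = 0 := by
  induction M with
  | zero => intro j hj; obtain ⟨j, rfl⟩ := Nat.exists_eq_succ_of_ne_zero hj.ne'; simp [gb]
  | succ M ih =>
    intro j hj
    obtain ⟨j, rfl⟩ := Nat.exists_eq_succ_of_ne_zero (by omega : j ≠ 0)
    rw [Nat.succ_eq_add_one, gb_succ, ih _ (by omega), ih _ (by omega)]
    simp

lemma gb_closed (q : ℂ) (M : ℕ) : ∀ j l, j + l = M → gb q M j * (qP q j * qP q l) = qP q M := by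
  induction M with
  | zero =>
    intro j l h
    obtain ⟨rfl, rfl⟩ : j = 0 ∧ l = 0 := by omega
    simp [gb, qP]
  | succ M ih =>
    intro j l h
    rcases j with _ | j
    · obtain rfl : l = M + 1 := by omega
      rw [gb_zero_right]; simp [qP]
    rcases l with _ | l
    · obtain rfl : j = M := by omega
      rw [gb_succ, gb_eq_zero q j (j + 1) (by omega), qP_succ]
      have e := ih j 0 (by omega)
      simp only [Nat.sub_self]
      linear_combination (1 - q ^ (j + 1)) * e
    · have e1 := ih (j + 1) l (by omega)
      have e2 := ih j (l + 1) (by omega)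
      have e3 : M - j = l + 1 := by omega
      have e4 : M + 1 = (j + 1) + (l + 1) := by omega
      rw [gb_succ, e3, qP_succ q M, e4, pow_add q (j + 1) (l + 1)]
      rw [qP_succ] at e1 e2 ⊢
      rw [qP_succ q l]
      linear_combination (1 - q ^ (l + 1)) * e1 + q ^ (l + 1) * (1 - q ^ (j + 1)) * e2

lemma q_binom (q z : ℂ) (M : ℕ) : ∏ i ∈ Finset.range M, (1 + z * q ^ i) =
    ∑ j ∈ Finset.range (M + 1), q ^ (j.choose 2) * gb q M j * z ^ j := by
  induction M with
  | zero => simp [gb]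
  | succ M ih =>
    rw [Finset.prod_range_succ, ih, mul_add, mul_one]
    have h1 : ∑ j ∈ Finset.range (M + 1), q ^ (j.choose 2) * gb q M j * z ^ j =
        ∑ j ∈ Finset.range (M + 1), q ^ ((j + 1).choose 2) * gb q M (j + 1) * z ^ (j + 1) + 1 := by
      have : ∑ j ∈ Finset.range (M + 1), q ^ (j.choose 2) * gb q M j * z ^ j =
          ∑ j ∈ Finset.range (M + 1 + 1), q ^ (j.choose 2) * gb q M j * z ^ j := by
        rw [Finset.sum_range_succ _ (M + 1), gb_eq_zero q M (M + 1) (by omega)]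
        simp
      rw [this, Finset.sum_range_succ' _ (M + 1), gb_zero_right]
      simp
    nth_rewrite 1 [h1]
    rw [Finset.sum_range_succ' _ (M + 1), gb_zero_right, Finset.sum_mul, add_right_comm,
      ← Finset.sum_add_distrib]
    congr 1
    · refine Finset.sum_congr rfl fun j hj => ?_
      have hj : j ≤ M := by simpa [Nat.lt_succ_iff] using hj
      have e : (j + 1).choose 2 = j + j.choose 2 := by
        rw [Nat.choose_succ_succ' j 1]; simp
      rw [gb_succ, e]
      have : q ^ M = q ^ j * q ^ (M - j) := by rw [← pow_add]; congr 1; omega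
      rw [this]
      ring
    · simp

noncomputable def tt (q w : ℂ) (k : ℤ) : ℂ := q ^ (k * (k + 1) / 2) * w ^ k

lemma two_E (k : ℤ) : 2 * (k * (k + 1) / 2) = k * (k + 1) :=
  Int.two_mul_ediv_two_of_even (Int.even_mul_succ_self k)

lemma two_choose (j : ℕ) : 2 * ((j.choose 2 : ℕ) : ℤ) = j * (j - 1) := by
  induction j with
  | zero => simp
  | succ j ih =>
    have e : (j + 1).choose 2 = j + j.choose 2 := by
      rw [Nat.choose_succ_succ' j 1]; simp
    rw [e]; push_cast; linarith

lemma natE (n : ℕ) : n * (n + 1) / 2 = (n + 1).choose 2 := by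
  rw [Nat.choose_two_right, Nat.add_sub_cancel, mul_comm]

lemma tt_nat (q w : ℂ) (n : ℕ) : tt q w n = q ^ (n * (n + 1) / 2) * w ^ n := by
  unfold tt
  rw [zpow_natCast w n, ← zpow_natCast q]
  norm_num

lemma tt_neg (q w : ℂ) (n : ℕ) :
    tt q w (-((n : ℤ) + 1)) = q ^ (n * (n + 1) / 2) * w ^ (-((n : ℤ) + 1)) := by
  unfold tt
  congr 1
  rw [← zpow_natCast q]
  congr 1
  push_cast
  congr 1
  ring

lemma norm_tt_nat (q w : ℂ) (n : ℕ) :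
    ‖q ^ (n * (n + 1) / 2) * w ^ n‖ = ‖q‖ ^ (n * (n + 1) / 2) * ‖w‖ ^ n := by
  rw [norm_mul, norm_pow, norm_pow]

lemma summable_theta_real {r ρ : ℝ} (h0 : 0 < r) (h1 : r < 1) (hρ : 0 < ρ) :
    Summable fun n : ℕ => r ^ (n * (n + 1) / 2) * ρ ^ n := by
  refine summable_of_ratio_test_tendsto_lt_one (l := 0) (by norm_num)
    (Eventually.of_forall fun n => by positivity) ?_
  have : ∀ n : ℕ, ‖r ^ ((n + 1) * (n + 1 + 1) / 2) * ρ ^ (n + 1)‖ /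
      ‖r ^ (n * (n + 1) / 2) * ρ ^ n‖ = r ^ n * (r * ρ) := by
    intro n
    have e : (n + 1 + 1).choose 2 = (n + 1) + (n + 1).choose 2 := by
      rw [Nat.choose_succ_succ' (n + 1) 1]; simp
    rw [natE, natE, e, Real.norm_of_nonneg (by positivity), Real.norm_of_nonneg (by positivity)]
    field_simp
    ring
  simp only [this]
  simpa using (tendsto_pow_atTop_nhds_zero_of_lt_one h0.le h1).mul_const (r * ρ)

lemma summable_norm_nat {q w : ℂ} (h0 : q ≠ 0) (h1 : ‖q‖ < 1) (hw : w ≠ 0) :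
    Summable fun n : ℕ => ‖tt q w n‖ := by
  simp only [tt_nat, norm_tt_nat]
  exact summable_theta_real (norm_pos_iff.2 h0) h1 (norm_pos_iff.2 hw)

lemma norm_tt_neg (q w : ℂ) (n : ℕ) : ‖tt q w (-((n : ℤ) + 1))‖ =
    ‖q‖ ^ (n * (n + 1) / 2) * ‖w‖⁻¹ ^ n * ‖w‖⁻¹ := by
  rw [tt_neg, norm_mul, norm_pow, norm_zpow, zpow_neg]
  have : ‖w‖ ^ ((n : ℤ) + 1) = ‖w‖ ^ (n + 1) := by exact_mod_cast zpow_natCast ‖w‖ (n + 1)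
  rw [this, pow_succ, mul_inv, inv_pow]
  ring

lemma summable_norm_neg {q w : ℂ} (h0 : q ≠ 0) (h1 : ‖q‖ < 1) (hw : w ≠ 0) :
    Summable fun n : ℕ => ‖tt q w (-((n : ℤ) + 1))‖ := by
  simp only [norm_tt_neg]
  exact (summable_theta_real (norm_pos_iff.2 h0) h1 (inv_pos.2 (norm_pos_iff.2 hw))).mul_right _

lemma summable_norm_tt {q w : ℂ} (h0 : q ≠ 0) (h1 : ‖q‖ < 1) (hw : w ≠ 0) :
    Summable fun k : ℤ => ‖tt q w k‖ :=
  Summable.of_nat_of_neg_add_one (f := fun k : ℤ => ‖tt q w k‖) (summable_norm_nat h0 h1 hw)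
    (summable_norm_neg h0 h1 hw)

lemma prod_neg_y (q y : ℂ) (N : ℕ) : ∏ n ∈ Finset.range N, (-y * q ^ (n + 1)) =
    (-y) ^ N * q ^ ((N + 1).choose 2) := by
  induction N with
  | zero => simp
  | succ N ih =>
    have e : (N + 1 + 1).choose 2 = (N + 1) + (N + 1).choose 2 := by
      rw [Nat.choose_succ_succ' (N + 1) 1]; simp
    rw [Finset.prod_range_succ, ih, e]
    ring

lemma finite_triple {q y : ℂ} (hq : q ≠ 0) (hy : y ≠ 0) (N : ℕ) :
    (∏ n ∈ Finset.range N, (1 - y * q ^ (n + 1))) * ∏ n ∈ Finset.range N, (1 - q ^ n / y) =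
    ∑ j ∈ Finset.range (2 * N + 1), gb q (2 * N) j * tt q (-y) ((N : ℤ) - j) := by
  have hb := q_binom q (-(q ^ N)⁻¹ / y) (2 * N)
  rw [two_mul, Finset.prod_range_add, ← two_mul] at hb
  have h2 : ∏ n ∈ Finset.range N, (1 + -(q ^ N)⁻¹ / y * q ^ (N + n)) =
      ∏ n ∈ Finset.range N, (1 - q ^ n / y) := by
    refine Finset.prod_congr rfl fun n _ => ?_
    rw [pow_add]
    field_simp
    ring
  have h1 : ∏ n ∈ Finset.range N, (1 - y * q ^ (n + 1)) =
      ((-y) ^ N * q ^ ((N + 1).choose 2)) *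
        ∏ n ∈ Finset.range N, (1 + -(q ^ N)⁻¹ / y * q ^ n) := by
    rw [← Finset.prod_range_reflect (fun n => 1 + -(q ^ N)⁻¹ / y * q ^ n), ← prod_neg_y,
      ← Finset.prod_mul_distrib]
    refine Finset.prod_congr rfl fun n hn => ?_
    have hn : n < N := Finset.mem_range.1 hn
    have : q ^ N = q ^ (N - 1 - n) * q ^ (n + 1) := by rw [← pow_add]; congr 1; omega
    rw [this]
    field_simp
    ring
  rw [h2] at hb
  rw [h1, mul_assoc, hb, Finset.mul_sum]
  refine Finset.sum_congr rfl fun j _ => ?_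
  unfold tt
  have hy' : -y ≠ 0 := neg_ne_zero.2 hy
  have e1 : (-(q ^ N)⁻¹ / y) ^ j = q ^ (-((N : ℤ) * j)) * (-y) ^ (-(j : ℤ)) := by
    have : -(q ^ N)⁻¹ / y = (q ^ N)⁻¹ * (-y)⁻¹ := by
      rw [inv_neg, div_eq_mul_inv]; ring
    rw [this, mul_pow, zpow_neg, zpow_neg, zpow_natCast, inv_pow, inv_pow, ← pow_mul]
    congr 2
  rw [e1, ← zpow_natCast (-y) N, ← zpow_natCast q, ← zpow_natCast q, sub_eq_add_neg,
    zpow_add₀ hy']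
  have e2 : ((N : ℤ) + -(j : ℤ)) * ((N : ℤ) + -(j : ℤ) + 1) / 2 =
      ((N + 1).choose 2 : ℕ) + (j.choose 2 : ℕ) + -((N : ℤ) * j) := by
    have a1 := two_E ((N : ℤ) + -(j : ℤ))
    have a2 := two_choose (N + 1)
    have a3 := two_choose j
    push_cast at a2
    have : 2 * (((N : ℤ) + -(j : ℤ)) * ((N : ℤ) + -(j : ℤ) + 1) / 2) =
      2 * (((N + 1).choose 2 : ℕ) + (j.choose 2 : ℕ) + -((N : ℤ) * j)) := by
      linear_combination a1 - a2 - a3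
    exact mul_left_cancel₀ two_ne_zero this
  rw [e2, zpow_add₀ hq, zpow_add₀ hq]
  ring

noncomputable def fN (q y : ℂ) (N : ℕ) (k : ℤ) : ℂ :=
  if k.natAbs ≤ N then
    (qP q N ^ 2 / (qP q ((N : ℤ) - k).toNat * qP q ((N : ℤ) + k).toNat)) * tt q (-y) k else 0

lemma tsum_fN {q y : ℂ} (hq : q ≠ 0) (hq2 : ‖q‖ ≤ 1 / 2) (hy : y ≠ 0) (N : ℕ) :
    ∑' k, fN q y N k = qP q N ^ 2 / qP q (2 * N) *
      ((∏ n ∈ Finset.range N, (1 - y * q ^ (n + 1))) * ∏ n ∈ Finset.range N, (1 - q ^ n / y)) := by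
  rw [finite_triple hq hy, Finset.mul_sum, tsum_eq_sum (s := Finset.Icc (-(N : ℤ)) N)]
  · symm
    refine Finset.sum_nbij' (fun j : ℕ => (N : ℤ) - j) (fun k : ℤ => ((N : ℤ) - k).toNat)
      ?_ ?_ ?_ ?_ ?_
    · intro j hj; simp only [Finset.mem_range, Finset.mem_Icc] at *; omega
    · intro j hj; simp only [Finset.mem_range, Finset.mem_Icc] at *; omega
    · intro j hj; simp
    · intro j hj; simp only [Finset.mem_Icc] at *; omega
    · intro j hj
      simp only [Finset.mem_range] at hj
      obtain ⟨l, hl⟩ : ∃ l, j + l = 2 * N := ⟨2 * N - j, by omega⟩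
      have := gb_closed q (2 * N) j l hl
      unfold fN
      rw [if_pos (by omega)]
      have e1 : ((N : ℤ) - ((N : ℤ) - j)).toNat = j := by omega
      have e2 : ((N : ℤ) + ((N : ℤ) - j)).toNat = l := by omega
      rw [e1, e2, ← mul_assoc]
      congr 1
      have h1 := qP_ne hq2 j
      have h2 := qP_ne hq2 l
      have h3 := qP_ne hq2 (2 * N)
      field_simp
      linear_combination (qP q N ^ 2) * this
  · intro k hk
    simp only [Finset.mem_Icc] at hk
    unfold fN
    rw [if_neg (by omega)]

lemma fN_bound {q : ℂ} (hq2 : ‖q‖ ≤ 1 / 2) (y : ℂ) (N : ℕ) (k : ℤ) :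
    ‖fN q y N k‖ ≤ 3 ^ 2 / (0.24 * 0.24) * ‖tt q (-y) k‖ := by
  unfold fN
  split_ifs with h
  · rw [norm_mul, norm_div, norm_pow, norm_mul]
    have := qP_upper hq2 N
    have := qP_lower hq2 ((N : ℤ) - k).toNat
    have := qP_lower hq2 ((N : ℤ) + k).toNat
    gcongr
  · rw [norm_zero]; positivity

lemma fN_tendsto {q : ℂ} (hq2 : ‖q‖ ≤ 1 / 2) (y : ℂ) (k : ℤ) :
    Tendsto (fun N => fN q y N k) atTop (𝓝 (tt q (-y) k)) := by
  obtain ⟨P, hP, hlim⟩ := qP_tendsto hq2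
  have l1 : Tendsto (fun N : ℕ => ((N : ℤ) - k).toNat) atTop atTop :=
    tendsto_atTop_atTop.2 fun b => ⟨b + k.natAbs, fun a ha => by omega⟩
  have l2 : Tendsto (fun N : ℕ => ((N : ℤ) + k).toNat) atTop atTop :=
    tendsto_atTop_atTop.2 fun b => ⟨b + k.natAbs, fun a ha => by omega⟩
  have := ((hlim.pow 2).div ((hlim.comp l1).mul (hlim.comp l2)) (mul_ne_zero hP hP)).mul_const
    (tt q (-y) k)
  have e : P ^ 2 / (P * P) * tt q (-y) k = tt q (-y) k := by field_simp
  rw [e] at this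
  refine this.congr' ?_
  filter_upwards [eventually_ge_atTop k.natAbs] with N hN
  unfold fN
  rw [if_pos hN]
  rfl

lemma theta_lower {q y : ℂ} (hq : q ≠ 0) (hq2 : ‖q‖ ≤ 1 / 2) (hy : ‖y - 1‖ ≤ 1 / 200) :
    0.001 * ‖y - 1‖ ≤ ‖∑' k, tt q (-y) k‖ := by
  have hyl : 0.995 ≤ ‖y‖ := by
    have := norm_sub_norm_le (1 : ℂ) (1 - y)
    rw [sub_sub_cancel, norm_one, norm_sub_rev] at this
    norm_num at *
    linarith
  have hyu : ‖y‖ ≤ 1.005 := by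
    have := norm_add_le (1 : ℂ) (y - 1)
    rw [add_sub_cancel, norm_one] at this
    norm_num at *
    linarith
  have hy0 : y ≠ 0 := by rintro rfl; norm_num at hyl
  have hlim := tendsto_tsum_of_dominated_convergence
    ((summable_norm_tt hq (by linarith) (neg_ne_zero.2 hy0)).mul_left (3 ^ 2 / (0.24 * 0.24)))
    (fN_tendsto hq2 y) (Eventually.of_forall fun N k => fN_bound hq2 y N k)
  refine ge_of_tendsto hlim.norm ?_
  filter_upwards [eventually_ge_atTop 1] with N hN
  obtain ⟨N, rfl⟩ := Nat.exists_eq_add_of_le' hN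
  rw [tsum_fN hq hq2 hy0, Finset.prod_range_succ' (fun n => 1 - q ^ n / y)]
  simp only [norm_mul, norm_div, norm_pow]
  have a1 := qP_lower hq2 (N + 1)
  have a2 := qP_upper hq2 (2 * (N + 1))
  have a2' := qP_lower hq2 (2 * (N + 1))
  have a3 : 0.24 ≤ ‖∏ n ∈ Finset.range (N + 1), (1 - y * q ^ (n + 1))‖ := by
    refine prod_lower (fun n => ?_) _
    rw [norm_mul]
    exact mul_le_mul (by linarith) (qnorm_pow_le hq2 _) (norm_nonneg _) (by norm_num)
  have a4 : 0.24 ≤ ‖∏ n ∈ Finset.range N, (1 - q ^ (n + 1) / y)‖ := by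
    refine prod_lower (fun n => ?_) _
    rw [norm_div, div_le_iff₀ (by linarith)]
    have h1 := qnorm_pow_le hq2 (n + 1)
    have h2 : (0 : ℝ) < (1 / 2) ^ (n + 1) := by positivity
    nlinarith
  have a5 : ‖y - 1‖ / 1.005 ≤ ‖1 - q ^ 0 / y‖ := by
    have : 1 - q ^ 0 / y = (y - 1) / y := by field_simp
    rw [this, norm_div]
    have : 0 < ‖y‖ := by linarith
    gcongr
  calc 0.001 * ‖y - 1‖ ≤ 0.24 ^ 2 / 3 * (0.24 * (0.24 * (‖y - 1‖ / 1.005))) := by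
        have := norm_nonneg (y - 1)
        generalize ‖y - 1‖ = d at this
        ring_nf
        linarith
    _ ≤ _ := by
        have : 0 < ‖qP q (2 * (N + 1))‖ := by linarith
        gcongr

lemma n_le_E (n : ℕ) : n ≤ n * (n + 1) / 2 := by
  rw [Nat.le_div_iff_mul_le (by norm_num)]
  nlinarith [Nat.le_mul_self n]

lemma pow_E_le {q : ℂ} (hq2 : ‖q‖ ≤ 1 / 2) (n : ℕ) :
    ‖q‖ ^ (n * (n + 1) / 2) ≤ (1 / 2 : ℝ) ^ n :=
  (pow_le_pow_left₀ (norm_nonneg _) hq2 _).trans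
    (pow_le_pow_of_le_one (by norm_num) (by norm_num) (n_le_E n))

lemma split_theta {q x : ℂ} (h0 : q ≠ 0) (h1 : ‖q‖ < 1) (hx : x ≠ 0) :
    ∑' k, tt q x k = (∑' j : ℕ, q ^ (j * (j + 1) / 2) * x ^ j) +
      ∑' ν : ℕ, q ^ (ν * (ν + 1) / 2) * x ^ (-(ν + 1 : ℤ)) := by
  rw [tsum_of_nat_of_neg_add_one (summable_norm_nat h0 h1 hx).of_norm
    (summable_norm_neg h0 h1 hx).of_norm]
  simp only [tt_nat, tt_neg]

lemma G_bound {q x : ℂ} (hq2 : ‖q‖ ≤ 1 / 2) (hx : 1 ≤ ‖x‖) :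
    ‖∑' ν : ℕ, q ^ (ν * (ν + 1) / 2) * x ^ (-(ν + 1 : ℤ))‖ ≤ 2 * ‖x‖⁻¹ := by
  refine tsum_of_norm_bounded
    ((hasSum_geometric_two).mul_right ‖x‖⁻¹) fun n => ?_
  rw [← tt_neg, norm_tt_neg]
  gcongr
  calc _ ≤ (1 / 2 : ℝ) ^ n * 1 := by
        refine mul_le_mul (pow_E_le hq2 n) ?_ (by positivity) (by positivity)
        exact pow_le_one₀ (by positivity) (inv_le_one_of_one_le₀ hx)
    _ = _ := mul_one _

lemma T_bound {q y : ℂ} (h0 : q ≠ 0) (hq2 : ‖q‖ ≤ 1 / 2) (hl : 4 / 5 ≤ ‖y‖) (hu : ‖y‖ ≤ 6 / 5) :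
    ‖∑' k, tt q (-y) k‖ ≤ 6 := by
  have hy : y ≠ 0 := by rintro rfl; norm_num at hl
  have h1 : ‖q‖ < 1 := by linarith
  rw [tsum_of_nat_of_neg_add_one (summable_norm_nat h0 h1 (neg_ne_zero.2 hy)).of_norm
    (summable_norm_neg h0 h1 (neg_ne_zero.2 hy)).of_norm]
  have b1 : ‖∑' n : ℕ, tt q (-y) n‖ ≤ (1 - 3 / 5)⁻¹ := by
    refine tsum_of_norm_bounded (hasSum_geometric_of_lt_one (by norm_num) (by norm_num))
      fun n => ?_
    rw [tt_nat, norm_tt_nat, norm_neg]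
    calc _ ≤ (1 / 2 : ℝ) ^ n * (6 / 5) ^ n :=
          mul_le_mul (pow_E_le hq2 n) (by gcongr) (by positivity) (by positivity)
      _ = _ := by rw [← mul_pow]; norm_num
  have b2 : ‖∑' n : ℕ, tt q (-y) (-((n : ℤ) + 1))‖ ≤ (1 - 5 / 8)⁻¹ * (5 / 4) := by
    refine tsum_of_norm_bounded
      ((hasSum_geometric_of_lt_one (by norm_num) (by norm_num)).mul_right (5 / 4)) fun n => ?_
    have hi : ‖y‖⁻¹ ≤ 5 / 4 := by
      rw [inv_le_comm₀ (by linarith) (by norm_num)]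
      norm_num
      exact hl
    rw [norm_tt_neg, norm_neg]
    gcongr
    calc _ ≤ (1 / 2 : ℝ) ^ n * (5 / 4) ^ n :=
          mul_le_mul (pow_E_le hq2 n) (by gcongr) (by positivity) (by positivity)
      _ = _ := by rw [← mul_pow]; norm_num
  refine (norm_add_le _ _).trans ?_
  norm_num at b1 b2 ⊢
  linarith

lemma T_one (q : ℂ) : ∑' k, tt q (-1) k = 0 := by
  have h := (Equiv.subLeft (-1 : ℤ)).tsum_eq (tt q (-1))
  have e : ∀ k, tt q (-1) (Equiv.subLeft (-1 : ℤ) k) = -tt q (-1) k := by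
    intro k
    simp only [Equiv.subLeft_apply, tt]
    have e1 : (-1 - k) * (-1 - k + 1) = k * (k + 1) := by ring
    have e2 : (-1 : ℂ) ^ (-1 - k) = -(-1) ^ k := by
      rw [zpow_sub₀ (by norm_num)]
      rcases Int.even_or_odd k with hk | hk
      · rw [hk.neg_one_zpow]; norm_num
      · rw [hk.neg_one_zpow]; norm_num
    rw [e1, e2]; ring
  simp only [e, tsum_neg] at h
  have h2 : (2 : ℂ) * ∑' k, tt q (-1) k = 0 := by linear_combination -h
  simpa using h2

lemma theta_shift {q w : ℂ} (h0 : q ≠ 0) (hw : w ≠ 0) (s : ℕ) :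
    q ^ (s.choose 2) * ∑' k, tt q ((q ^ s)⁻¹ * w) k = w ^ s * ∑' k, tt q w k := by
  rw [← (Equiv.addRight (s : ℤ)).tsum_eq (tt q ((q ^ s)⁻¹ * w)), ← tsum_mul_left, ← tsum_mul_left]
  refine tsum_congr fun k => ?_
  simp only [Equiv.coe_addRight, tt]
  have e1 : ((q ^ s)⁻¹ * w) ^ (k + s) = q ^ (-((s : ℤ) * (k + s))) * (w ^ k * w ^ s) := by
    rw [mul_zpow, zpow_add₀ hw, zpow_natCast, ← zpow_natCast q, ← zpow_neg, ← zpow_mul]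
    congr 2
    ring
  have e2 : (k + s) * (k + s + 1) / 2 = k * (k + 1) / 2 + (s : ℤ) * (k + s) - (s.choose 2 : ℕ) := by
    have a1 := two_E (k + s)
    have a2 := two_E k
    have a3 := two_choose s
    have : 2 * ((k + s) * (k + s + 1) / 2) =
      2 * (k * (k + 1) / 2 + (s : ℤ) * (k + s) - (s.choose 2 : ℕ)) := by
      linear_combination a1 - a2 + a3
    exact mul_left_cancel₀ two_ne_zero this
  rw [e1, e2, zpow_sub₀ h0, zpow_add₀ h0, zpow_neg, zpow_natCast]
  have : q ^ ((s : ℤ) * (k + s)) ≠ 0 := zpow_ne_zero _ h0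
  field_simp

lemma theta_diff {q : ℂ} (h0 : q ≠ 0) (h1 : ‖q‖ < 1) :
    Differentiable ℂ fun x : ℂ => ∑' j : ℕ, q ^ (j * (j + 1) / 2) * x ^ j := by
  intro x
  have hp : 0 < ‖x‖ + 1 := by positivity
  have := Complex.differentiableOn_tsum_of_summable_norm (U := ball (0 : ℂ) (‖x‖ + 1))
    (F := fun (j : ℕ) (x : ℂ) => q ^ (j * (j + 1) / 2) * x ^ j)
    (summable_theta_real (norm_pos_iff.2 h0) h1 hp)
    (fun j => by fun_prop) isOpen_ball (fun j w hw => by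
      rw [norm_tt_nat]
      have : ‖w‖ ≤ ‖x‖ + 1 := (mem_ball_zero_iff.1 hw).le
      gcongr)
  exact this.differentiableAt (isOpen_ball.mem_nhds (by simp))

lemma pow_aux {r : ℝ} (hr0 : 0 < r) (hr : r ≤ 1 / 2) {s : ℕ} (hu : r ^ s < 1 / 2 ^ 32) :
    (s : ℝ) ^ 2 * r ^ s ≤ 1 / 2 ^ 22 := by
  rcases le_or_gt s 32 with h | h
  · have : (s : ℝ) ≤ 32 := by exact_mod_cast h
    have h2 : (s : ℝ) ^ 2 ≤ 32 ^ 2 := by gcongr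
    have := mul_le_mul h2 hu.le (by positivity) (by positivity)
    refine this.trans (by norm_num)
  · have key : ∀ n : ℕ, 33 ≤ n → n ^ 2 * 2 ^ 22 ≤ 2 ^ n := by
      intro n hn
      induction n, hn using Nat.le_induction with
      | base => norm_num
      | succ n hn ih => rw [pow_succ 2 n]; nlinarith
    have k := key s h
    have k' : (s : ℝ) ^ 2 * 2 ^ 22 ≤ 2 ^ s := by exact_mod_cast k
    have : r ^ s ≤ (1 / 2) ^ s := by gcongr
    calc (s : ℝ) ^ 2 * r ^ s ≤ (s : ℝ) ^ 2 * (1 / 2) ^ s := by gcongr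
      _ = ((s : ℝ) ^ 2 * 2 ^ 22) / 2 ^ s / 2 ^ 22 := by field_simp; rw [← mul_pow]; norm_num
      _ ≤ 1 / 2 ^ 22 := by
        gcongr
        exact div_le_one_of_le₀ k' (by positivity)

/-- For `0.2078750206 ≤ |q| ≤ 1/2`, if the circle `C(μ_s, 1/4)` lies in `{|x| > 8^11}` then
`|Θ*| > 1 > |G|` on it, and consequently `θ(q,·)` has exactly one zero, a simple one, in
the open disk `D(μ_s, 1/4)`. -/
theorem theta_unique_simple_zero_middle_q (q : ℂ)
    (hq1 : (0.2078750206 : ℝ) ≤ ‖q‖) (hq2 : ‖q‖ ≤ 1 / 2)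
    (s : ℕ) (hs : 1 ≤ s)
    (hsub : Metric.sphere (-q ^ (-(s : ℤ)) : ℂ) (1 / 4 : ℝ)
      ⊆ {x : ℂ | (8 : ℝ) ^ 11 < ‖x‖}) :
    (∀ x ∈ Metric.sphere (-q ^ (-(s : ℤ)) : ℂ) (1 / 4 : ℝ),
      1 < ‖∑' j : ℤ, q ^ (j * (j + 1) / 2) * x ^ j‖ ∧
      ‖∑' ν : ℕ, q ^ (ν * (ν + 1) / 2) * x ^ (-(ν + 1 : ℤ))‖ < 1) ∧
    ∃ z ∈ Metric.ball (-q ^ (-(s : ℤ)) : ℂ) (1 / 4 : ℝ),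
      (∑' j : ℕ, q ^ (j * (j + 1) / 2) * z ^ j = 0) ∧
      deriv (fun x : ℂ => ∑' j : ℕ, q ^ (j * (j + 1) / 2) * x ^ j) z ≠ 0 ∧
      ∀ w ∈ Metric.ball (-q ^ (-(s : ℤ)) : ℂ) (1 / 4 : ℝ),
        (∑' j : ℕ, q ^ (j * (j + 1) / 2) * w ^ j = 0) → w = z := by
  have hr0 : 0 < ‖q‖ := lt_of_lt_of_le (by norm_num) hq1
  have h0 : q ≠ 0 := norm_pos_iff.1 hr0
  have h1 : ‖q‖ < 1 := by linarith
  set M : ℂ := (q ^ s)⁻¹ with hM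
  have hqs : q ^ s ≠ 0 := pow_ne_zero _ h0
  have hM0 : M ≠ 0 := inv_ne_zero hqs
  have hMz : -q ^ (-(s : ℤ)) = -M := by rw [zpow_neg, zpow_natCast]
  rw [hMz] at hsub ⊢
  set u : ℝ := ‖q‖ ^ s with hu_def
  have hu0 : 0 < u := by positivity
  have hMn : ‖M‖ = u⁻¹ := by rw [hM, norm_inv, norm_pow]
  have hMu : ‖M‖ * u = 1 := by rw [hMn]; field_simp
  -- size of `u`
  have hMbig : (2 : ℝ) ^ 32 < ‖M‖ := by
    have hx : -M + ((1 / 4 : ℝ) : ℂ) ∈ sphere (-M) (1 / 4 : ℝ) := by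
      rw [mem_sphere, dist_eq_norm, add_sub_cancel_left, Complex.norm_real]
      norm_num
    have a := hsub hx
    rw [Set.mem_ofPred_eq] at a
    have b := norm_add_le (-M) (((1 / 4 : ℝ) : ℂ))
    rw [norm_neg, Complex.norm_real, Real.norm_of_nonneg (by norm_num)] at b
    norm_num at a b ⊢
    linarith
  have hu : u < 1 / 2 ^ 32 := by
    rw [lt_div_iff₀ (by positivity)]
    calc u * 2 ^ 32 < u * ‖M‖ := by gcongr
      _ = 1 := by rw [mul_comm]; exact hMu
  have hs5 : 5 ≤ s := by
    by_contra hlt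
    have hs4 : s ≤ 4 := by omega
    have : (1 / 5 : ℝ) ^ 4 ≤ u := by
      calc (1 / 5 : ℝ) ^ 4 ≤ (1 / 5 : ℝ) ^ s :=
            pow_le_pow_of_le_one (by norm_num) (by norm_num) hs4
        _ ≤ u := by
          have : (1 / 5 : ℝ) ≤ ‖q‖ := le_trans (by norm_num) hq1
          rw [hu_def]; gcongr
    norm_num at this hu
    linarith
  have hsu := pow_aux hr0 hq2 hu
  rw [← hu_def] at hsu
  have hsR : (5 : ℝ) ≤ s := by exact_mod_cast hs5
  have hs0 : (0 : ℝ) < s := by linarith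
  have hsu1 : (s : ℝ) * u ≤ 1 / 2 ^ 22 := by
    refine le_trans ?_ hsu
    rw [pow_two, mul_assoc]
    have : 0 < (s : ℝ) * u := by positivity
    nlinarith
  set A : ℂ := q ^ (s.choose 2) with hA_def
  have hA0 : A ≠ 0 := pow_ne_zero _ h0
  have hAp : 0 < ‖A‖ := norm_pos_iff.2 hA0
  have hA : ‖A‖ ≤ u ^ 2 := by
    rw [hA_def, norm_pow, hu_def, ← pow_mul]
    refine pow_le_pow_of_le_one hr0.le h1.le ?_
    have := two_choose s
    have hs5' : (5 : ℤ) ≤ s := by exact_mod_cast hs5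
    zify
    nlinarith
  -- norms of `y`
  have hyl : ∀ y : ℂ, 1 - ‖y - 1‖ ≤ ‖y‖ := by
    intro y
    have := norm_sub_norm_le (1 : ℂ) (1 - y)
    rw [sub_sub_cancel, norm_one, norm_sub_rev] at this
    exact this
  have hyu : ∀ y : ℂ, ‖y‖ ≤ 1 + ‖y - 1‖ := by
    intro y
    have := norm_add_le (1 : ℂ) (y - 1)
    rw [add_sub_cancel, norm_one] at this
    exact this
  -- lower bound on the small circle
  have hlow : ∀ y : ℂ, ‖y - 1‖ = u / 4 → 0.0005 * (u / 4) ≤ ‖(-y) ^ s * ∑' k, tt q (-y) k‖ := by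
    intro y hy
    have e1 : ‖y - 1‖ ≤ 1 / 200 := by rw [hy]; norm_num at hu ⊢; linarith
    have t := theta_lower h0 hq2 e1
    rw [hy] at t
    have e2 := hyl y
    rw [hy] at e2
    have e3 : 1 / 2 ≤ ‖y‖ ^ s := by
      have b := one_add_mul_le_pow (a := -(u / 4)) (by norm_num at hu ⊢; linarith) s
      have c : (1 + -(u / 4)) ^ s ≤ ‖y‖ ^ s := by
        refine pow_le_pow_left₀ ?_ (by linarith) s
        norm_num at hu ⊢; linarith
      norm_num at hsu1
      nlinarith
    rw [norm_mul, norm_pow, norm_neg]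
    calc 0.0005 * (u / 4) = 1 / 2 * (0.001 * (u / 4)) := by ring
      _ ≤ _ := mul_le_mul e3 t (by positivity) (by positivity)
  constructor
  · intro x hx
    have hxb := hsub hx
    rw [Set.mem_ofPred_eq] at hxb
    rw [mem_sphere, dist_eq_norm] at hx
    constructor
    · change 1 < ‖∑' k, tt q x k‖
      have hx0 : x ≠ 0 := by
        rintro rfl
        norm_num at hxb
      have hyx : ‖-(q ^ s * x) - 1‖ = u / 4 := by
        have : -(q ^ s * x) - 1 = -(q ^ s * (x - -M)) := by
          rw [hM]; field_simp; ring
        rw [this, norm_neg, norm_mul, hx, norm_pow]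
        ring
      have hw : q ^ s * x ≠ 0 := mul_ne_zero hqs hx0
      have sh := theta_shift h0 hw s
      have lo := hlow _ hyx
      rw [neg_neg, ← sh, inv_mul_cancel_left₀ hqs, norm_mul] at lo
      by_contra hcon
      push Not at hcon
      have : ‖A‖ * ‖∑' k, tt q x k‖ ≤ u ^ 2 * 1 :=
        mul_le_mul hA hcon (norm_nonneg _) (by positivity)
      have h3 : u * (0.0005 / 4) ≤ u * u := by
        calc u * (0.0005 / 4) = 0.0005 * (u / 4) := by ring
          _ ≤ _ := lo
          _ ≤ _ := this
          _ = u * u := by ring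
      have := le_of_mul_le_mul_left h3 hu0
      norm_num at hu this
      linarith
    · refine lt_of_le_of_lt (G_bound hq2 (le_trans (by norm_num) hxb.le)) ?_
      rw [← div_eq_mul_inv, div_lt_one (lt_trans (by norm_num) hxb)]
      exact lt_trans (by norm_num) hxb
  -- the rescaled function
  set θ : ℂ → ℂ := fun x : ℂ => ∑' j : ℕ, q ^ (j * (j + 1) / 2) * x ^ j with hθ
  set G : ℂ → ℂ := fun x : ℂ => ∑' ν : ℕ, q ^ (ν * (ν + 1) / 2) * x ^ (-(ν + 1 : ℤ)) with hG
  have hθd : Differentiable ℂ θ := theta_diff h0 h1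
  set φ : ℂ → ℂ := fun y => A * θ (-M * y) with hφ
  have hφd : Differentiable ℂ φ := by
    intro y
    exact ((hθd (-M * y)).comp y (by fun_prop : DifferentiableAt ℂ (fun y => -M * y) y)).const_mul A
  have hφeq : ∀ y : ℂ, y ≠ 0 → φ y = (-y) ^ s * (∑' k, tt q (-y) k) - A * G (-M * y) := by
    intro y hy
    have hsp := split_theta h0 h1 (mul_ne_zero (neg_ne_zero.2 hM0) hy)
    have sh := theta_shift h0 (neg_ne_zero.2 hy) s
    have e : (q ^ s)⁻¹ * -y = -M * y := by rw [hM]; ring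
    rw [e, hsp] at sh
    rw [← sh]
    simp only [hφ, hθ, hG]
    ring
  have hGs : ∀ y : ℂ, 4 / 5 ≤ ‖y‖ → ‖A * G (-M * y)‖ ≤ u ^ 2 := by
    intro y hy
    have hn : 2 ≤ ‖-M * y‖ := by
      rw [norm_mul, norm_neg]
      have := mul_le_mul hMbig.le hy (by norm_num) (by positivity)
      norm_num at this ⊢
      linarith
    have hg := G_bound hq2 (x := -M * y) (by linarith)
    rw [norm_mul]
    have : 2 * ‖-M * y‖⁻¹ ≤ 1 := by
      rw [← div_eq_mul_inv]
      exact div_le_one_of_le₀ hn (by positivity)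
    have := mul_le_mul hA (hg.trans this) (norm_nonneg _) (by positivity)
    rw [mul_one] at this
    exact this
  have hu2 : u ^ 2 ≤ u * (1 / 2 ^ 32) := by rw [pow_two]; gcongr
  have hφ1 : ‖φ 1‖ ≤ u ^ 2 := by
    rw [hφeq 1 one_ne_zero, T_one, mul_zero, zero_sub, norm_neg]
    exact hGs 1 (by norm_num)
  obtain ⟨y, hyb, hy0, hyd, hyuq⟩ := aux_unique hφd (c := 1) (R := 1 / s) (ε := u / 4) (B := 19)
    (m := 0.0004) (by positivity) (by positivity)
    (by
      gcongr
      rw [le_div_iff₀ hs0]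
      norm_num at hsu1
      linarith)
    (by
      intro y hy
      rw [mem_closedBall, dist_eq_norm] at hy
      have hs5i : 1 / (s : ℝ) ≤ 1 / 5 := by gcongr
      have a1 := hyl y
      have a2 := hyu y
      have hy4 : 4 / 5 ≤ ‖y‖ := by linarith
      have hy6 : ‖y‖ ≤ 6 / 5 := by linarith
      have hyne : y ≠ 0 := by rintro rfl; norm_num at hy4
      have t := T_bound h0 hq2 hy4 hy6
      have hp : ‖(-y) ^ s‖ ≤ 3 := by
        rw [norm_pow, norm_neg]
        calc ‖y‖ ^ s ≤ (Real.exp (1 / s)) ^ s := by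
              gcongr
              have := Real.add_one_le_exp (1 / (s : ℝ))
              linarith
          _ = Real.exp 1 := by
              rw [← Real.exp_nat_mul]
              congr 1
              field_simp
          _ ≤ 3 := by linarith [Real.exp_one_lt_d9]
      rw [hφeq y hyne]
      refine (norm_sub_le _ _).trans ?_
      have g := hGs y hy4
      have m1 : ‖(-y) ^ s * ∑' k, tt q (-y) k‖ ≤ 3 * 6 := by
        rw [norm_mul]
        exact mul_le_mul hp t (norm_nonneg _) (by norm_num)
      norm_num at hu2 hu
      linarith)
    (by
      intro y hy
      rw [mem_sphere, dist_eq_norm] at hy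
      have a1 := hyl y
      have hy4 : 4 / 5 ≤ ‖y‖ := by norm_num at hu; linarith
      have hyne : y ≠ 0 := by rintro rfl; norm_num at hy4
      have lo := hlow y hy
      have g := hGs y hy4
      have e : φ y - φ 1 = (-y) ^ s * (∑' k, tt q (-y) k) - (A * G (-M * y) + φ 1) := by
        rw [hφeq y hyne]; ring
      rw [e]
      have n1 := norm_sub_norm_le ((-y) ^ s * (∑' k, tt q (-y) k)) (A * G (-M * y) + φ 1)
      have n2 := norm_add_le (A * G (-M * y)) (φ 1)
      norm_num at hu2
      linarith)
    (by
      norm_num at hu2 ⊢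
      linarith)
    (by
      have : 16 * 19 * (u / 4) / (1 / (s : ℝ)) ^ 2 = 76 * ((s : ℝ) ^ 2 * u) := by
        field_simp; ring
      rw [this]
      norm_num at hsu ⊢
      linarith)
  have hdist : ∀ w : ℂ, dist (-M * w) (-M) = ‖M‖ * ‖w - 1‖ := by
    intro w
    have : -M * w - -M = -(M * (w - 1)) := by ring
    rw [dist_eq_norm, this, norm_neg, norm_mul]
  refine ⟨-M * y, ?_, ?_, ?_, ?_⟩
  · rw [mem_ball, hdist]
    rw [mem_ball, dist_eq_norm] at hyb
    calc ‖M‖ * ‖y - 1‖ < ‖M‖ * (u / 4) := by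
          have : 0 < ‖M‖ := norm_pos_iff.2 hM0
          gcongr
      _ = 1 / 4 := by linear_combination hMu / 4
  · exact (mul_eq_zero.1 hy0).resolve_left hA0
  · intro hd
    apply hyd
    have hm : HasDerivAt (fun y : ℂ => -M * y) (-M) y := by
      simpa using (hasDerivAt_id y).const_mul (-M)
    have hc := ((hθd (-M * y)).hasDerivAt.comp y hm).const_mul A
    have := hc.deriv
    rw [hd, zero_mul, mul_zero] at this
    exact this
  · intro w hw hw0
    have hww : w = -M * (-(q ^ s) * w) := by rw [hM]; field_simp
    have hz : -(q ^ s) * w = y := by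
      apply hyuq
      · rw [mem_ball, dist_eq_norm]
        rw [hww, mem_ball, hdist] at hw
        have : u * (‖M‖ * ‖-(q ^ s) * w - 1‖) < u * (1 / 4) := by gcongr
        calc ‖-(q ^ s) * w - 1‖ = u * (‖M‖ * ‖-(q ^ s) * w - 1‖) := by
              rw [← mul_assoc, mul_comm u, hMu, one_mul]
          _ < _ := this
          _ = u / 4 := by ring
      · simp only [hφ]
        rw [← hww]
        change A * (∑' j : ℕ, q ^ (j * (j + 1) / 2) * w ^ j) = 0
        rw [hw0, mul_zero]
    rw [hww, hz]
end

section
/- For every q ∈ ℂ with 1/2 ≤ |q| < 1, the partial theta function θ(q,·) has no multiple zeros ζ with |ζ| > 8^11: there is no ζ ∈ ℂ with |ζ| > 8^11, θ(q,ζ) = 0 and ∂θ/∂x(q,ζ) = 0. -/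
open Finset Filter Topology

lemma pt_prod_lower_aux (s : ℝ) (h0 : 0 < s) (h1 : s < 1) (M : ℕ) :
    Real.exp (-4 * √(1 - s ^ M) / (1 - s)) ≤ ∏ i ∈ range M, (1 - s ^ (i + 1)) := by
  induction M with
  | zero => simp
  | succ M ih =>
    rw [prod_range_succ]
    have hs : 0 < 1 - s := by linarith
    have hM : s ^ M ≤ 1 := pow_le_one₀ h0.le h1.le
    have hM0 : 0 < s ^ M := pow_pos h0 M
    have hM1 : s ^ (M + 1) < 1 := pow_lt_one₀ h0.le h1 (by omega)
    have hpos : 0 < 1 - s ^ (M + 1) := by linarith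
    set w := √(1 - s ^ (M + 1)) with hw
    set w' := √(1 - s ^ M) with hw'
    have hw0 : 0 < w := Real.sqrt_pos.2 hpos
    have hw'0 : 0 ≤ w' := Real.sqrt_nonneg _
    have hww : w ^ 2 = 1 - s ^ (M + 1) := Real.sq_sqrt hpos.le
    have hww' : w' ^ 2 = 1 - s ^ M := Real.sq_sqrt (by linarith)
    have hps : s ^ (M + 1) = s ^ M * s := pow_succ _ _
    have hle : w' ≤ w := Real.sqrt_le_sqrt (by nlinarith)
    have hw1 : w ≤ 1 := by nlinarith
    have e1 : Real.exp (-(2 * (1 / w - 1))) ≤ 1 - s ^ (M + 1) := by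
      rw [← hww]
      have : 1 / w ≤ Real.exp (1 / w - 1) := by
        have := Real.add_one_le_exp (1 / w - 1); linarith
      rw [Real.exp_neg, two_mul, Real.exp_add]
      have h2 : (1 / w) * (1 / w) ≤ Real.exp (1 / w - 1) * Real.exp (1 / w - 1) := by
        gcongr
      calc _ ≤ ((1 / w) * (1 / w))⁻¹ := by gcongr
        _ = w ^ 2 := by field_simp
    have e2 : 2 * (1 / w - 1) ≤ 4 * (w - w') / (1 - s) := by
      rw [le_div_iff₀ hs]
      have h3 : s ^ M * (1 - s) = (w - w') * (w + w') := by nlinarith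
      have h4 : s ^ M * (1 - s) ≤ (w - w') * (2 * w) := by
        rw [h3]; apply mul_le_mul_of_nonneg_left <;> linarith
      have h5 : 1 - w ≤ s ^ M := by nlinarith
      have : 2 * (1 / w - 1) * (1 - s) = (2 * (1 - w) * (1 - s)) / w := by field_simp
      rw [this, div_le_iff₀ hw0]
      nlinarith
    calc _ ≤ Real.exp (-4 * w' / (1 - s) + -(2 * (1 / w - 1))) := by
          apply Real.exp_le_exp.2
          have : 4 * (w - w') / (1 - s) = -4 * w' / (1 - s) - -4 * w / (1 - s) := by ring
          linarith
      _ ≤ _ := by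
          rw [Real.exp_add]
          exact mul_le_mul ih e1 (Real.exp_nonneg _) ((Real.exp_nonneg _).trans ih)

lemma pt_prod_lower (s : ℝ) (h0 : 0 < s) (h1 : s < 1) (M : ℕ) :
    Real.exp (-4 / (1 - s)) ≤ ∏ i ∈ range M, (1 - s ^ (i + 1)) := by
  refine le_trans (Real.exp_le_exp.2 ?_) (pt_prod_lower_aux s h0 h1 M)
  have hs : 0 < 1 - s := by linarith
  have : √(1 - s ^ M) ≤ 1 := Real.sqrt_le_one.2 (by have := pow_pos h0 M; linarith)
  gcongr
  linarith

lemma pt_prod_lower_odd (s : ℝ) (h0 : 0 < s) (h1 : s < 1) (M : ℕ) :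
    Real.exp (-4 / (1 - s)) ≤ ∏ i ∈ range M, (1 - s ^ (2 * i + 1)) := by
  refine le_trans (pt_prod_lower s h0 h1 (2 * M)) ?_
  induction M with
  | zero => simp
  | succ M ih =>
    rw [show 2 * (M + 1) = 2 * M + 1 + 1 by ring, prod_range_succ, prod_range_succ, prod_range_succ]
    have hp : ∀ n, 0 ≤ 1 - s ^ n := fun n => by have := pow_le_one₀ (n := n) h0.le h1.le; linarith
    have : 1 - s ^ (2 * M + 1 + 1) ≤ 1 := by have := pow_pos h0 (2 * M + 1 + 1); linarith
    have h3 : 0 ≤ ∏ i ∈ range (2 * M), (1 - s ^ (i + 1)) := prod_nonneg fun i _ => hp _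
    calc _ ≤ (∏ i ∈ range (2 * M), (1 - s ^ (i + 1))) * (1 - s ^ (2 * M + 1)) * 1 := by
          gcongr; exact mul_nonneg h3 (hp _)
      _ ≤ _ := by rw [mul_one]; gcongr; exact hp _

/-- The `q`-factorial product. -/
noncomputable def ptQ (q : ℂ) (n : ℕ) : ℂ := ∏ m ∈ range n, (1 - q ^ (m + 1))

lemma ptQ_succ (q : ℂ) (n : ℕ) : ptQ q (n + 1) = ptQ q n * (1 - q ^ (n + 1)) :=
  prod_range_succ _ _

lemma pt_one_sub_ne (q : ℂ) (h1 : ‖q‖ < 1) (n : ℕ) : 1 - q ^ (n + 1) ≠ 0 := by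
  intro h
  have : ‖q ^ (n + 1)‖ < 1 := by rw [norm_pow]; exact pow_lt_one₀ (norm_nonneg _) h1 (by omega)
  rw [← sub_eq_zero.1 h] at this
  simp at this

lemma ptQ_ne (q : ℂ) (h1 : ‖q‖ < 1) (n : ℕ) : ptQ q n ≠ 0 :=
  prod_ne_zero_iff.2 fun m _ => pt_one_sub_ne q h1 m

lemma ptQ_tendsto (q : ℂ) (h1 : ‖q‖ < 1) : ∃ L : ℂ, L ≠ 0 ∧ Tendsto (ptQ q) atTop (𝓝 L) := by
  have hs : Summable fun m : ℕ => ‖-(q ^ (m + 1))‖ := by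
    simp only [norm_neg, norm_pow]
    exact (summable_nat_add_iff 1).2 (summable_geometric_of_lt_one (norm_nonneg _) h1)
  refine ⟨∏' m : ℕ, (1 + -(q ^ (m + 1))), ?_, ?_⟩
  · refine tprod_one_add_ne_zero_of_summable (f := fun m : ℕ => -(q ^ (m + 1))) ?_ hs
    intro m
    have := pt_one_sub_ne q h1 m
    rwa [sub_eq_add_neg] at this
  · have := (multipliable_one_add_of_summable hs).hasProd.tendsto_prod_nat
    have h : ptQ q = fun n => ∏ i ∈ range n, (1 + -q ^ (i + 1)) := by
      funext n; simp only [ptQ, sub_eq_add_neg]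
    rw [h]; exact this

/-- Gaussian binomial coefficients. -/
noncomputable def ptGB (q : ℂ) : ℕ → ℕ → ℂ
  | _, 0 => 1
  | 0, _ + 1 => 0
  | n + 1, i + 1 => ptGB q n (i + 1) + q ^ (n - i) * ptGB q n i

lemma ptGB_zero_right (q : ℂ) (n : ℕ) : ptGB q n 0 = 1 := by cases n <;> simp [ptGB]

lemma ptGB_eq_zero (q : ℂ) (n : ℕ) : ∀ i, n < i → ptGB q n i = 0 := by
  induction n with
  | zero => intro i hi; obtain ⟨i, rfl⟩ := Nat.exists_eq_succ_of_ne_zero (by omega : i ≠ 0); simp [ptGB]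
  | succ n ih =>
    intro i hi
    obtain ⟨i, rfl⟩ := Nat.exists_eq_succ_of_ne_zero (by omega : i ≠ 0)
    simp [ptGB, ih (i + 1) (by omega), ih i (by omega)]

lemma ptGB_mul (q : ℂ) (n : ℕ) : ∀ a b, a + b = n → ptGB q n a * (ptQ q a * ptQ q b) = ptQ q n := by
  induction n with
  | zero => intro a b h; obtain ⟨rfl, rfl⟩ : a = 0 ∧ b = 0 := by omega
            simp [ptGB, ptQ]
  | succ n ih =>
    intro a b h
    rcases a with _ | a
    · obtain rfl : b = n + 1 := by omega
      simp [ptGB, ptQ]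
    rcases b with _ | b
    · obtain rfl : a = n := by omega
      have := ih a 0 (by omega)
      simp only [ptGB, ptGB_eq_zero q a (a + 1) (by omega), ptQ_succ, Nat.sub_self]
      linear_combination (1 - q ^ (a + 1)) * this
    · have e1 := ih (a + 1) b (by omega)
      have e2 := ih a (b + 1) (by omega)
      have : n - a = b + 1 := by omega
      simp only [ptGB, this]
      obtain rfl : n = a + b + 1 := by omega
      rw [ptQ_succ q (a + b + 1)]
      rw [ptQ_succ] at e1 e2 ⊢
      rw [ptQ_succ q b] 
      have : q ^ (a + b + 1 + 1) = q ^ (a + 1) * q ^ (b + 1) := by ring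
      rw [this]
      linear_combination (1 - q ^ (b + 1)) * e1 + q ^ (b + 1) * (1 - q ^ (a + 1)) * e2

lemma pt_qbinom (q y : ℂ) (N : ℕ) :
    ∏ m ∈ range N, (1 + y * q ^ m) =
      ∑ i ∈ range (N + 1), ptGB q N i * q ^ (i.choose 2) * y ^ i := by
  induction N with
  | zero => simp [ptGB]
  | succ N ih =>
    rw [prod_range_succ, ih, sum_range_succ' _ (N + 1)]
    have h1 : ∑ i ∈ range (N + 1), ptGB q N i * q ^ (i.choose 2) * y ^ i =
        ∑ i ∈ range (N + 1), ptGB q N (i + 1) * q ^ ((i + 1).choose 2) * y ^ (i + 1) + 1 := by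
      have := sum_range_succ' (fun i => ptGB q N i * q ^ (i.choose 2) * y ^ i) (N + 1)
      rw [sum_range_succ, ptGB_eq_zero q N (N + 1) (by omega)] at this
      simpa [ptGB_zero_right] using this
    rw [mul_add, mul_one, sum_mul]
    conv_lhs => rw [h1]
    rw [add_right_comm, ← sum_add_distrib]
    congr 1
    · refine sum_congr rfl fun i hi => ?_
      have hi' : i ≤ N := by have := mem_range.1 hi; omega
      have : q ^ N = q ^ (N - i) * q ^ i := by rw [← pow_add]; congr 1; omega
      rw [this]
      have hc : (i + 1).choose 2 = i + i.choose 2 := by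
        rw [Nat.choose_succ_succ' i 1, Nat.choose_one_right]
      simp only [ptGB, hc, pow_add]
      ring
    · simp [ptGB]

/-- coefficient in the finite triple product -/
noncomputable def ptB (q : ℂ) (n j : ℕ) : ℂ := ptQ q (2 * n) / (ptQ q (n + j) * ptQ q (n - j))

lemma ptGB_eq (q : ℂ) (h1 : ‖q‖ < 1) (n a b : ℕ) (h : a + b = n) :
    ptGB q n a = ptQ q n / (ptQ q a * ptQ q b) := by
  rw [eq_div_iff (mul_ne_zero (ptQ_ne q h1 _) (ptQ_ne q h1 _)), ptGB_mul q n a b h]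

lemma pt_choose_add (n j : ℕ) :
    (n + j).choose 2 + (n + j) + n.choose 2 = n * (n + j) + (j + 1).choose 2 := by
  have e : ∀ m : ℕ, 2 * m.choose 2 + m = m * m := by
    intro m
    induction m with
    | zero => rfl
    | succ m ih =>
      rw [Nat.choose_succ_succ' m 1, Nat.choose_one_right]; linarith
  have := e (n + j); have := e n; have := e (j + 1)
  nlinarith

lemma pt_triple (q x : ℂ) (hq : q ≠ 0) (h1 : ‖q‖ < 1) (hx : x ≠ 0) (n : ℕ) :
    (∏ m ∈ range n, (1 + x * q ^ (m + 1))) * (∏ a ∈ range n, (1 + q ^ a * x⁻¹)) =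
      ∑ j ∈ range (n + 1), ptB q n j * (q ^ ((j + 1).choose 2) * x ^ j) +
      ∑ l ∈ range n, ptB q n (l + 1) * (q ^ ((l + 1).choose 2) * x⁻¹ ^ (l + 1)) := by
  have key := pt_qbinom q (x * q / q ^ n) (2 * n)
  have hqn : ∀ k, q ^ k ≠ 0 := fun k => pow_ne_zero k hq
  have hl : ∏ m ∈ range (2 * n), (1 + x * q / q ^ n * q ^ m) =
      (x ^ n / q ^ (n.choose 2)) * ((∏ m ∈ range n, (1 + x * q ^ (m + 1))) *
        (∏ a ∈ range n, (1 + q ^ a * x⁻¹))) := by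
    have hA : ∏ m ∈ range n, (1 + x * q / q ^ n * q ^ (n + m)) =
        ∏ m ∈ range n, (1 + x * q ^ (m + 1)) := by
      refine prod_congr rfl fun m _ => ?_
      have := hqn n
      rw [pow_add, pow_succ q m]; field_simp
    have hB : ∏ m ∈ range n, (1 + x * q / q ^ n * q ^ m) =
        ∏ a ∈ range n, ((x / q ^ a) * (1 + q ^ a * x⁻¹)) := by
      rw [← prod_range_reflect]
      refine prod_congr rfl fun a ha => ?_
      have ha := mem_range.1 ha
      have e : q ^ n = q ^ (n - 1 - a) * q * q ^ a := by
        rw [← pow_succ, ← pow_add]; congr 1; omega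
      have := hqn a; have := hqn (n - 1 - a)
      rw [e]; field_simp; ring
    have hC : ∏ a ∈ range n, (x / q ^ a) = x ^ n / q ^ (n.choose 2) := by
      rw [prod_div_distrib, prod_const, card_range, prod_pow_eq_pow_sum, sum_range_id, Nat.choose_two_right]
    rw [two_mul, prod_range_add, hA, hB, prod_mul_distrib, hC]; ring
  rw [hl] at key
  have hne : x ^ n / q ^ (n.choose 2) ≠ 0 := div_ne_zero (pow_ne_zero _ hx) (hqn _)
  apply mul_left_cancel₀ hne
  rw [key, show 2 * n + 1 = n + (n + 1) by ring, sum_range_add, add_comm, mul_add, mul_sum, mul_sum]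
  congr 1
  · refine sum_congr rfl fun j hj => ?_
    have hj := mem_range.1 hj
    rw [ptGB_eq q h1 (2 * n) (n + j) (n - j) (by omega), ← ptB]
    have e : q ^ (n + j).choose 2 * q ^ (n + j) * q ^ n.choose 2 =
        q ^ (n * (n + j)) * q ^ (j + 1).choose 2 := by
      rw [← pow_add, ← pow_add, ← pow_add, pt_choose_add]
    rw [div_pow, mul_pow, ← pow_mul]
    have := hqn (n * (n + j)); have := hqn (n.choose 2)
    field_simp
    rw [pow_add x]
    linear_combination (ptB q n j * x ^ n * x ^ j) * e
  · rw [← sum_range_reflect]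
    refine sum_congr rfl fun l hl => ?_
    have hl := mem_range.1 hl
    obtain ⟨i, rfl⟩ : ∃ i, n = i + (l + 1) := ⟨n - (l + 1), by omega⟩
    rw [show i + (l + 1) - 1 - l = i by omega]
    rw [ptGB_eq q h1 (2 * (i + (l + 1))) i (i + (l + 1) + (l + 1)) (by omega)]
    have hB : ptQ q (2 * (i + (l + 1))) / (ptQ q i * ptQ q (i + (l + 1) + (l + 1))) =
        ptB q (i + (l + 1)) (l + 1) := by
      rw [ptB, Nat.add_sub_cancel, mul_comm (ptQ q i)]
    rw [hB]
    have e : q ^ i.choose 2 * q ^ i * q ^ (i + (l + 1)).choose 2 =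
        q ^ ((i + (l + 1)) * i) * q ^ (l + 1).choose 2 := by
      have hc : i.choose 2 + i + (i + (l + 1)).choose 2 = (i + (l + 1)) * i + (l + 1).choose 2 := by
        have h1 := pt_choose_add i (l + 1)
        rw [Nat.choose_succ_succ' (l + 1) 1, Nat.choose_one_right] at h1
        nlinarith
      rw [← pow_add, ← pow_add, ← pow_add, hc]
    rw [div_pow, mul_pow, ← pow_mul, inv_pow, pow_add x i (l + 1)]
    have hx' : x ^ (l + 1) ≠ 0 := pow_ne_zero _ hx
    generalize x ^ (l + 1) = X at *
    have := hqn ((i + (l + 1)) * i); have := hqn ((i + (l + 1)).choose 2)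
    field_simp
    linear_combination (ptB q (i + (l + 1)) (l + 1)) * e

lemma pt_lim (q : ℂ) (h1 : ‖q‖ < 1) (f : ℕ → ℂ) (hf : Summable fun j => ‖f j‖) :
    Tendsto (fun n => ptQ q n * ∑ j ∈ range (n + 1), ptB q n j * f j) atTop (𝓝 (∑' j, f j)) := by
  obtain ⟨L, hL, hQ⟩ := ptQ_tendsto q h1
  obtain ⟨B, hB⟩ := (Metric.isBounded_range_of_tendsto _ hQ).exists_norm_le
  obtain ⟨A, hA⟩ := (Metric.isBounded_range_of_tendsto _ (hQ.inv₀ hL)).exists_norm_le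
  have hB : ∀ n, ‖ptQ q n‖ ≤ B := fun n => hB _ ⟨n, rfl⟩
  have hA : ∀ n, ‖(ptQ q n)⁻¹‖ ≤ A := fun n => hA _ ⟨n, rfl⟩
  have hB0 : 0 ≤ B := (norm_nonneg _).trans (hB 0)
  have hA0 : 0 ≤ A := (norm_nonneg _).trans (hA 0)
  have key : Tendsto (fun n => ∑' j, (if j ≤ n then ptQ q n * ptB q n j * f j else 0)) atTop
      (𝓝 (∑' j, f j)) := by
    refine tendsto_tsum_of_dominated_convergence (bound := fun j => B * B * (A * A) * ‖f j‖)
      (hf.mul_left _) ?_ ?_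
    · intro j
      have t1 : Tendsto (fun n => ptQ q (2 * n)) atTop (𝓝 L) :=
        hQ.comp (tendsto_id.const_mul_atTop' (by norm_num))
      have t2 : Tendsto (fun n => ptQ q (n + j)) atTop (𝓝 L) := hQ.comp (tendsto_add_atTop_nat j)
      have t3 : Tendsto (fun n => ptQ q (n - j)) atTop (𝓝 L) := hQ.comp (tendsto_sub_atTop_nat j)
      have t4 : Tendsto (fun n => ptQ q n * ptB q n j * f j) atTop
          (𝓝 (L * (L / (L * L)) * f j)) :=
        (hQ.mul (t1.div (t2.mul t3) (mul_ne_zero hL hL))).mul_const _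
      have e : L * (L / (L * L)) * f j = f j := by field_simp
      rw [e] at t4
      refine t4.congr' ?_
      filter_upwards [eventually_ge_atTop j] with n hn
      simp [hn]
    · refine Eventually.of_forall fun n j => ?_
      split_ifs with h
      · rw [norm_mul]
        gcongr
        rw [norm_mul, ptB, norm_div, norm_mul]
        have a1 := hA (n + j); have a2 := hA (n - j)
        rw [norm_inv] at a1 a2
        rw [div_eq_mul_inv, mul_inv, ← mul_assoc]
        gcongr
        · exact hB _
        · exact hB _
      · simp; positivity
  refine key.congr fun n => ?_
  rw [tsum_eq_sum (s := range (n + 1)) fun j hj => if_neg (by simpa using hj), mul_sum]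
  refine sum_congr rfl fun j hj => ?_
  rw [if_pos (by have := mem_range.1 hj; omega)]; ring

lemma pt_lim' (q : ℂ) (h1 : ‖q‖ < 1) (f : ℕ → ℂ) (hf : Summable fun j => ‖f j‖) :
    Tendsto (fun n => ptQ q n * ∑ j ∈ range n, ptB q n (j + 1) * f j) atTop (𝓝 (∑' j, f j)) := by
  let g : ℕ → ℂ := fun j => if j = 0 then 0 else f (j - 1)
  have hg : Summable fun j => ‖g j‖ := by
    rw [← summable_nat_add_iff 1]; simpa [g] using hf
  have h := pt_lim q h1 g hg
  rw [hg.of_norm.tsum_eq_zero_add] at h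
  simp only [sum_range_succ'] at h
  simpa [g] using h

lemma pt_summable (r R : ℝ) (h0 : 0 < r) (h1 : r < 1) (hR : 0 < R) :
    Summable fun j : ℕ => r ^ ((j + 1).choose 2) * R ^ j := by
  refine summable_of_ratio_test_tendsto_lt_one (l := 0) (by norm_num)
    (Eventually.of_forall fun j => by positivity) ?_
  have : Tendsto (fun j : ℕ => r ^ j * (r * R)) atTop (𝓝 0) := by
    simpa using (tendsto_pow_atTop_nhds_zero_of_lt_one h0.le h1).mul_const (r * R)
  refine this.congr fun j => ?_
  rw [Real.norm_of_nonneg (by positivity), Real.norm_of_nonneg (by positivity),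
    Nat.choose_succ_succ' (j + 1) 1, Nat.choose_one_right, pow_add, pow_succ R]
  field_simp
  ring

lemma pt_summable' (r R : ℝ) (h0 : 0 < r) (h1 : r < 1) (hR : 0 < R) :
    Summable fun j : ℕ => (j : ℝ) * (r ^ ((j + 1).choose 2) * R ^ j) := by
  refine Summable.of_nonneg_of_le (fun j => by positivity) (fun j => ?_)
    (pt_summable r (2 * R) h0 h1 (by positivity))
  rw [mul_pow]
  have : (j : ℝ) ≤ 2 ^ j := by exact_mod_cast Nat.lt_two_pow_self.le
  calc _ ≤ 2 ^ j * (r ^ ((j + 1).choose 2) * R ^ j) := by gcongr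
    _ = _ := by ring

lemma pt_hasDeriv (q : ℂ) (hq : q ≠ 0) (h1 : ‖q‖ < 1) (ζ : ℂ) :
    HasDerivAt (fun x : ℂ => ∑' j : ℕ, q ^ ((j + 1).choose 2) * x ^ j)
      (∑' j : ℕ, q ^ ((j + 1).choose 2) * (j * ζ ^ (j - 1))) ζ := by
  have hr : 0 < ‖q‖ := norm_pos_iff.2 hq
  set R := ‖ζ‖ + 1 with hR
  have hR1 : 1 ≤ R := by have := norm_nonneg ζ; linarith
  refine hasDerivAt_tsum_of_isPreconnected (t := Metric.ball 0 R) (y₀ := ζ) (y := ζ)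
    (g := fun (j : ℕ) (x : ℂ) => q ^ ((j + 1).choose 2) * x ^ j)
    (g' := fun (j : ℕ) (x : ℂ) => q ^ ((j + 1).choose 2) * (j * x ^ (j - 1)))
    (pt_summable' ‖q‖ R hr h1 (by linarith))
    Metric.isOpen_ball (convex_ball _ _).isPreconnected ?_ ?_ (by simp [R]) ?_ (by simp [R])
  · intro j y _
    exact (hasDerivAt_pow j y).const_mul _
  · intro j y hy
    have hy : ‖y‖ ≤ R := by simpa using (Metric.mem_ball.1 hy).le
    rw [norm_mul, norm_mul, norm_pow, norm_pow, Complex.norm_natCast]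
    have : ‖y‖ ^ (j - 1) ≤ R ^ j :=
      (pow_le_pow_left₀ (norm_nonneg _) hy _).trans (pow_le_pow_right₀ hR1 (by omega))
    calc _ ≤ ‖q‖ ^ ((j + 1).choose 2) * (j * R ^ j) := by gcongr
      _ = _ := by ring
  · refine Summable.of_norm_bounded (pt_summable ‖q‖ R hr h1 (by linarith)) fun j => ?_
    rw [norm_mul, norm_pow, norm_pow]
    gcongr
    linarith

/-- logarithmic derivative bound -/
def ptLD (ζ : ℂ) (f : ℂ → ℂ) (b : ℝ) : Prop := ∃ D, HasDerivAt f D ζ ∧ ‖ζ * D‖ ≤ b * ‖f ζ‖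

lemma ptLD.mul {ζ : ℂ} {f g : ℂ → ℂ} {a b : ℝ} (hf : ptLD ζ f a) (hg : ptLD ζ g b) :
    ptLD ζ (fun x => f x * g x) (a + b) := by
  obtain ⟨D, hD, h⟩ := hf
  obtain ⟨E, hE, h'⟩ := hg
  refine ⟨_, hD.mul hE, ?_⟩
  calc ‖ζ * (D * g ζ + f ζ * E)‖ = ‖(ζ * D) * g ζ + f ζ * (ζ * E)‖ := by ring_nf
    _ ≤ ‖ζ * D‖ * ‖g ζ‖ + ‖f ζ‖ * ‖ζ * E‖ := by
      rw [← norm_mul, ← norm_mul]; exact norm_add_le _ _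
    _ ≤ (a * ‖f ζ‖) * ‖g ζ‖ + ‖f ζ‖ * (b * ‖g ζ‖) := by gcongr
    _ = _ := by rw [norm_mul]; ring

lemma ptLD.prod {ζ : ℂ} {f : ℕ → ℂ → ℂ} {b : ℕ → ℝ} (n : ℕ) (h : ∀ i < n, ptLD ζ (f i) (b i)) :
    ptLD ζ (fun x => ∏ i ∈ range n, f i x) (∑ i ∈ range n, b i) := by
  induction n with
  | zero => exact ⟨0, by simpa using hasDerivAt_const ζ (1 : ℂ), by simp⟩
  | succ n ih =>
    simp only [prod_range_succ, sum_range_succ]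
    exact (ih fun i hi => h i (by omega)).mul (h n (by omega))

lemma ptLD_lin (ζ c : ℂ) (b : ℝ) (h : ‖ζ * c‖ ≤ b * ‖1 + ζ * c‖) :
    ptLD ζ (fun x => 1 + x * c) b := by
  refine ⟨c, ?_, h⟩
  simpa using ((hasDerivAt_id ζ).mul_const c).const_add 1

lemma ptLD_inv (ζ c : ℂ) (hζ : ζ ≠ 0) (b : ℝ) (h : ‖c * ζ⁻¹‖ ≤ b * ‖1 + c * ζ⁻¹‖) :
    ptLD ζ (fun x => 1 + c * x⁻¹) b := by
  refine ⟨c * (-(ζ ^ 2)⁻¹), ((hasDerivAt_inv hζ).const_mul c).const_add 1, ?_⟩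
  have : ζ * (c * (-(ζ ^ 2)⁻¹)) = -(c * ζ⁻¹) := by field_simp
  rw [this, norm_neg]; exact h

lemma ptLD.mono {ζ : ℂ} {f : ℂ → ℂ} {a b : ℝ} (h : ptLD ζ f a) (hab : a ≤ b) : ptLD ζ f b := by
  obtain ⟨D, hD, h⟩ := h
  exact ⟨D, hD, h.trans (by gcongr)⟩

lemma pt_small (s : ℝ) (h0 : 0 < s) (h1 : s < 1) (z : ℂ) (e : ℕ) (he : 1 ≤ e) (hz : ‖z‖ ≤ s ^ e)
    (i : ℕ) (hi : i ≤ e) :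
    1 - s ^ e ≤ ‖1 + z‖ ∧ ‖z‖ ≤ (s ^ i * (1 / (1 - s))) * ‖1 + z‖ := by
  have hs : 0 < 1 - s := by linarith
  have a : 1 - ‖z‖ ≤ ‖1 + z‖ := by
    have := norm_sub_norm_le (1 : ℂ) (-z); simpa using this
  have b : s ^ e ≤ s := by simpa using pow_le_pow_of_le_one h0.le h1.le he
  have c : s ^ e ≤ s ^ i := pow_le_pow_of_le_one h0.le h1.le hi
  refine ⟨by linarith, ?_⟩
  have d : 1 ≤ 1 / (1 - s) * ‖1 + z‖ := by
    rw [one_div, ← div_eq_inv_mul, one_le_div hs]; linarith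
  calc ‖z‖ ≤ s ^ i * 1 := by linarith
    _ ≤ s ^ i * (1 / (1 - s) * ‖1 + z‖) := by gcongr
    _ = _ := by ring

lemma pt_large (s : ℝ) (h0 : 0 < s) (h1 : s < 1) (z : ℂ) (e : ℕ) (he : 1 ≤ e) (hz : 1 ≤ ‖z‖ * s ^ e) :
    s⁻¹ ^ e * (1 - s ^ e) ≤ ‖1 + z‖ ∧ ‖z‖ ≤ (1 / (1 - s)) * ‖1 + z‖ := by
  have hs : 0 < 1 - s := by linarith
  have a : ‖z‖ - 1 ≤ ‖1 + z‖ := by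
    have := norm_sub_norm_le z (-1 : ℂ); simpa [add_comm] using this
  have b : s ^ e ≤ s := by simpa using pow_le_pow_of_le_one h0.le h1.le he
  have hp : 0 < s ^ e := pow_pos h0 e
  constructor
  · have : s⁻¹ ^ e ≤ ‖z‖ := by
      rw [inv_pow, inv_eq_one_div, div_le_iff₀ hp]; exact hz
    have : s⁻¹ ^ e * s ^ e = 1 := by rw [inv_pow, inv_mul_cancel₀ hp.ne']
    linarith
  · rw [one_div, ← div_eq_inv_mul, le_div_iff₀ hs]
    nlinarith [norm_nonneg z]

lemma pt_geom (s : ℝ) (h0 : 0 < s) (h1 : s < 1) (n : ℕ) :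
    ∑ i ∈ range n, s ^ i ≤ 1 / (1 - s) := by
  have := (summable_geometric_of_lt_one h0.le h1).sum_le_tsum (range n) (fun i _ => by positivity)
  rwa [tsum_geometric_of_lt_one h0.le h1, ← one_div] at this

lemma pt_Q_lower (q : ℂ) (s : ℝ) (h0 : 0 < s) (h1 : s < 1) (hq : ‖q‖ = s ^ 2) (n : ℕ) :
    Real.exp (-4 / (1 - s)) ≤ ‖ptQ q n‖ := by
  refine (pt_prod_lower s h0 h1 n).trans ?_
  rw [ptQ, norm_prod]
  have hp : ∀ n, 0 ≤ 1 - s ^ n := fun n => by have := pow_le_one₀ (n := n) h0.le h1.le; linarith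
  refine prod_le_prod (fun i _ => hp _) fun i _ => ?_
  have a : 1 - ‖q ^ (i + 1)‖ ≤ ‖1 - q ^ (i + 1)‖ := by
    have := norm_sub_norm_le (1 : ℂ) (q ^ (i + 1)); simpa using this
  rw [norm_pow, hq, ← pow_mul] at a
  have : s ^ (2 * (i + 1)) ≤ s ^ (i + 1) := pow_le_pow_of_le_one h0.le h1.le (by omega)
  linarith

/-- The product with the dangerous factor removed. -/
noncomputable def ptH (q : ℂ) (K p : ℕ) (x : ℂ) : ℂ :=
  (∏ i ∈ range K, (1 + x * q ^ (K - i))) * (∏ i ∈ range p, (1 + x * q ^ (K + 2 + i))) *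
    (∏ a ∈ range (K + 1 + p), (1 + q ^ a * x⁻¹))

lemma ptH_eq (q x : ℂ) (K p : ℕ) :
    (1 + x * q ^ (K + 1)) * ptH q K p x =
      (∏ m ∈ range (K + 1 + p), (1 + x * q ^ (m + 1))) *
        (∏ a ∈ range (K + 1 + p), (1 + q ^ a * x⁻¹)) := by
  rw [prod_range_add, prod_range_succ, ptH]
  have e1 : ∏ i ∈ range K, (1 + x * q ^ (K - i)) = ∏ m ∈ range K, (1 + x * q ^ (m + 1)) := by
    rw [← prod_range_reflect]
    refine prod_congr rfl fun i hi => ?_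
    have := mem_range.1 hi
    rw [show K - (K - 1 - i) = i + 1 by omega]
  have e2 : ∏ i ∈ range p, (1 + x * q ^ (K + 2 + i)) =
      ∏ i ∈ range p, (1 + x * q ^ (K + 1 + i + 1)) := by
    refine prod_congr rfl fun i hi => ?_
    rw [show K + 2 + i = K + 1 + i + 1 by ring]
  rw [e1, e2]; ring

lemma ptH_bounds (q ζ : ℂ) (s : ℝ) (h0 : 0 < s) (h1 : s < 1) (hq : ‖q‖ = s ^ 2) (K p : ℕ)
    (hy1 : s ≤ ‖ζ‖ * s ^ (2 * (K + 1))) (hy2 : ‖ζ‖ * s ^ (2 * (K + 1)) * s ≤ 1) (hζ : ζ ≠ 0) :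
    s⁻¹ ^ (K ^ 2) * (Real.exp (-4 / (1 - s))) ^ 2 ≤ ‖ptH q K p ζ‖ ∧
    ptLD ζ (ptH q K p) (K * (1 / (1 - s)) + 2 * (1 / (1 - s)) ^ 2) := by
  have hs : 0 < 1 - s := by linarith
  have hX : 0 < ‖ζ‖ := norm_pos_iff.2 hζ
  have A : ∀ i < K, s⁻¹ ^ (2 * i + 1) * (1 - s ^ (2 * i + 1)) ≤ ‖1 + ζ * q ^ (K - i)‖ ∧
      ‖ζ * q ^ (K - i)‖ ≤ (1 / (1 - s)) * ‖1 + ζ * q ^ (K - i)‖ := by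
    intro i hi
    refine pt_large s h0 h1 _ (2 * i + 1) (by omega) ?_
    rw [norm_mul, norm_pow, hq, ← pow_mul]
    have e : s ^ (2 * (K + 1)) = s ^ (2 * (K - i)) * s ^ (2 * i + 1) * s := by
      rw [mul_assoc, ← pow_succ, ← pow_add]; congr 1; omega
    rw [e] at hy1
    have : 1 * s ≤ (‖ζ‖ * s ^ (2 * (K - i)) * s ^ (2 * i + 1)) * s := by linarith
    exact le_of_mul_le_mul_right this h0
  have B : ∀ i < p, 1 - s ^ (2 * i + 1) ≤ ‖1 + ζ * q ^ (K + 2 + i)‖ ∧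
      ‖ζ * q ^ (K + 2 + i)‖ ≤ (s ^ i * (1 / (1 - s))) * ‖1 + ζ * q ^ (K + 2 + i)‖ := by
    intro i hi
    refine pt_small s h0 h1 _ (2 * i + 1) (by omega) ?_ i (by omega)
    rw [norm_mul, norm_pow, hq, ← pow_mul]
    have e : s ^ (2 * (K + 2 + i)) = s ^ (2 * (K + 1)) * s * s ^ (2 * i + 1) := by ring
    rw [e]
    calc _ = (‖ζ‖ * s ^ (2 * (K + 1)) * s) * s ^ (2 * i + 1) := by ring
      _ ≤ 1 * s ^ (2 * i + 1) := by gcongr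
      _ = _ := one_mul _
  have C : ∀ a < K + 1 + p, 1 - s ^ (2 * (K + a) + 1) ≤ ‖1 + q ^ a * ζ⁻¹‖ ∧
      ‖q ^ a * ζ⁻¹‖ ≤ (s ^ a * (1 / (1 - s))) * ‖1 + q ^ a * ζ⁻¹‖ := by
    intro a ha
    refine pt_small s h0 h1 _ (2 * (K + a) + 1) (by omega) ?_ a (by omega)
    rw [norm_mul, norm_pow, hq, ← pow_mul, norm_inv, ← div_eq_mul_inv, div_le_iff₀ hX]
    have e : s ^ (2 * (K + a) + 1) * s = s ^ (2 * (K + 1)) * s ^ (2 * a) := by ring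
    have h3 : s ^ (2 * a) * s ≤ s ^ (2 * a) * (‖ζ‖ * s ^ (2 * (K + 1))) := by gcongr
    have : s ^ (2 * a) * s ≤ (s ^ (2 * (K + a) + 1) * ‖ζ‖) * s := by
      calc _ ≤ _ := h3
        _ = ‖ζ‖ * (s ^ (2 * (K + 1)) * s ^ (2 * a)) := by ring
        _ = _ := by rw [← e]; ring
    exact le_of_mul_le_mul_right this h0
  have hp : ∀ n, 0 ≤ 1 - s ^ n := fun n => by have := pow_le_one₀ (n := n) h0.le h1.le; linarith
  constructor
  · rw [ptH, norm_mul, norm_mul, norm_prod, norm_prod, norm_prod]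
    have a' : s⁻¹ ^ (K ^ 2) * ∏ i ∈ range K, (1 - s ^ (2 * i + 1)) ≤
        ∏ i ∈ range K, ‖1 + ζ * q ^ (K - i)‖ := by
      have : s⁻¹ ^ (K ^ 2) = ∏ i ∈ range K, s⁻¹ ^ (2 * i + 1) := by
        rw [prod_pow_eq_pow_sum]
        congr 1
        clear * -
        induction K with
        | zero => rfl
        | succ K ih => rw [sum_range_succ, ← ih]; ring
      rw [this, ← prod_mul_distrib]
      exact prod_le_prod (fun i _ => mul_nonneg (by positivity) (hp _))
        fun i hi => (A i (mem_range.1 hi)).1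
    have b' : Real.exp (-4 / (1 - s)) ≤ ∏ i ∈ range p, ‖1 + ζ * q ^ (K + 2 + i)‖ :=
      (pt_prod_lower_odd s h0 h1 p).trans
        (prod_le_prod (fun i _ => hp _) fun i hi => (B i (mem_range.1 hi)).1)
    have c' : ∏ a ∈ range (K + 1 + p), (1 - s ^ (2 * (K + a) + 1)) ≤
        ∏ a ∈ range (K + 1 + p), ‖1 + q ^ a * ζ⁻¹‖ :=
      prod_le_prod (fun i _ => hp _) fun i hi => (C i (mem_range.1 hi)).1
    have d' := pt_prod_lower_odd s h0 h1 (K + (K + 1 + p))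
    rw [prod_range_add] at d'
    have p1 : 0 ≤ ∏ i ∈ range K, (1 - s ^ (2 * i + 1)) := prod_nonneg fun i _ => hp _
    have p2 : 0 ≤ ∏ a ∈ range (K + 1 + p), (1 - s ^ (2 * (K + a) + 1)) := prod_nonneg fun i _ => hp _
    calc _ = s⁻¹ ^ (K ^ 2) * Real.exp (-4 / (1 - s)) * Real.exp (-4 / (1 - s)) := by ring
      _ ≤ s⁻¹ ^ (K ^ 2) * ((∏ i ∈ range K, (1 - s ^ (2 * i + 1))) *
          ∏ a ∈ range (K + 1 + p), (1 - s ^ (2 * (K + a) + 1))) * Real.exp (-4 / (1 - s)) := by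
          gcongr
      _ = (s⁻¹ ^ (K ^ 2) * (∏ i ∈ range K, (1 - s ^ (2 * i + 1)))) * Real.exp (-4 / (1 - s)) *
          ∏ a ∈ range (K + 1 + p), (1 - s ^ (2 * (K + a) + 1)) := by ring
      _ ≤ _ := by gcongr
  · have l1 := ptLD.prod (ζ := ζ) K fun i hi => ptLD_lin ζ (q ^ (K - i)) _ (A i hi).2
    have l2 := ptLD.prod (ζ := ζ) p fun i hi => ptLD_lin ζ (q ^ (K + 2 + i)) _ (B i hi).2
    have l3 := ptLD.prod (ζ := ζ) (K + 1 + p) fun i hi => ptLD_inv ζ (q ^ i) hζ _ (C i hi).2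
    refine ((l1.mul l2).mul l3).mono ?_
    rw [sum_const, card_range, ← sum_mul, ← sum_mul, nsmul_eq_mul]
    have g1 := pt_geom s h0 h1 p
    have g2 := pt_geom s h0 h1 (K + 1 + p)
    have hv : 0 ≤ 1 / (1 - s) := by positivity
    have := mul_le_mul_of_nonneg_right g1 hv
    have := mul_le_mul_of_nonneg_right g2 hv
    nlinarith

lemma pt_fin (q ζ : ℂ) (s : ℝ) (h0 : 0 < s) (h1 : s < 1) (hq : ‖q‖ = s ^ 2) (K p : ℕ)
    (hy1 : s ≤ ‖ζ‖ * s ^ (2 * (K + 1))) (hy2 : ‖ζ‖ * s ^ (2 * (K + 1)) * s ≤ 1) (hζ : ζ ≠ 0)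
    (n : ℕ) (hn : n = K + 1 + p) :
    s * (s⁻¹ ^ (K ^ 2) * (Real.exp (-4 / (1 - s))) ^ 3) ≤
      ‖ptQ q n * ∑ j ∈ range (n + 1), ptB q n j * (q ^ ((j + 1).choose 2) * (j * ζ ^ j)) -
       ptQ q n * ∑ l ∈ range n, ptB q n (l + 1) *
          (q ^ ((l + 1).choose 2) * ((l + 1 : ℕ) * ζ⁻¹ ^ (l + 1)))‖ +
      (K * (1 / (1 - s)) + 2 * (1 / (1 - s)) ^ 2) *
      ‖ptQ q n * ∑ j ∈ range (n + 1), ptB q n j * (q ^ ((j + 1).choose 2) * ζ ^ j) +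
       ptQ q n * ∑ l ∈ range n, ptB q n (l + 1) * (q ^ ((l + 1).choose 2) * ζ⁻¹ ^ (l + 1))‖ := by
  have hq1 : ‖q‖ < 1 := by rw [hq]; nlinarith
  have hq0 : q ≠ 0 := by rw [← norm_pos_iff, hq]; positivity
  obtain ⟨hH, D, hD, hDle⟩ := ptH_bounds q ζ s h0 h1 hq K p hy1 hy2 hζ
  set S := K * (1 / (1 - s)) + 2 * (1 / (1 - s)) ^ 2 with hS
  have hQ := pt_Q_lower q s h0 h1 hq n
  have htr : ∀ x : ℂ, x ≠ 0 → (1 + x * q ^ (K + 1)) * ptH q K p x = 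
      ∑ j ∈ range (n + 1), ptB q n j * (q ^ ((j + 1).choose 2) * x ^ j) +
      ∑ l ∈ range n, ptB q n (l + 1) * (q ^ ((l + 1).choose 2) * x⁻¹ ^ (l + 1)) := by
    intro x hx
    rw [ptH_eq, ← hn, pt_triple q x hq0 hq1 hx]
  have d1 : HasDerivAt (fun x => (1 + x * q ^ (K + 1)) * ptH q K p x)
      (q ^ (K + 1) * ptH q K p ζ + (1 + ζ * q ^ (K + 1)) * D) ζ := by
    have : HasDerivAt (fun x : ℂ => 1 + x * q ^ (K + 1)) (q ^ (K + 1)) ζ := by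
      simpa using ((hasDerivAt_id ζ).mul_const (q ^ (K + 1))).const_add 1
    exact this.mul hD
  have d2 : HasDerivAt (fun x : ℂ => 
      ∑ j ∈ range (n + 1), ptB q n j * (q ^ ((j + 1).choose 2) * x ^ j) +
      ∑ l ∈ range n, ptB q n (l + 1) * (q ^ ((l + 1).choose 2) * x⁻¹ ^ (l + 1)))
      (∑ j ∈ range (n + 1), ptB q n j * (q ^ ((j + 1).choose 2) * (j * ζ ^ (j - 1))) +
      ∑ l ∈ range n, ptB q n (l + 1) * (q ^ ((l + 1).choose 2) *
        ((l + 1 : ℕ) * ζ⁻¹ ^ l * (-(ζ ^ 2)⁻¹)))) ζ := by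
    refine HasDerivAt.add (HasDerivAt.fun_sum fun j _ => ?_) (HasDerivAt.fun_sum fun l _ => ?_)
    · exact ((hasDerivAt_pow j ζ).const_mul _).const_mul _
    · have := (hasDerivAt_inv hζ).fun_pow (l + 1)
      rw [Nat.add_sub_cancel] at this
      exact (this.const_mul _).const_mul _
  have hev : (fun x : ℂ => 
      ∑ j ∈ range (n + 1), ptB q n j * (q ^ ((j + 1).choose 2) * x ^ j) +
      ∑ l ∈ range n, ptB q n (l + 1) * (q ^ ((l + 1).choose 2) * x⁻¹ ^ (l + 1))) =ᶠ[𝓝 ζ]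
      fun x => (1 + x * q ^ (K + 1)) * ptH q K p x := by
    filter_upwards [isOpen_ne.mem_nhds hζ] with x hx
    exact (htr x hx).symm
  have heq := (d1.congr_of_eventuallyEq hev).unique d2
  have hmul : ζ * q ^ (K + 1) * ptH q K p ζ + (1 + ζ * q ^ (K + 1)) * (ζ * D) =
      ∑ j ∈ range (n + 1), ptB q n j * (q ^ ((j + 1).choose 2) * (j * ζ ^ j)) -
       ∑ l ∈ range n, ptB q n (l + 1) *
          (q ^ ((l + 1).choose 2) * ((l + 1 : ℕ) * ζ⁻¹ ^ (l + 1))) := by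
    have : ζ * q ^ (K + 1) * ptH q K p ζ + (1 + ζ * q ^ (K + 1)) * (ζ * D) =
      ζ * (q ^ (K + 1) * ptH q K p ζ + (1 + ζ * q ^ (K + 1)) * D) := by ring
    rw [this, heq, mul_add, sub_eq_add_neg, mul_sum, mul_sum, ← sum_neg_distrib]
    congr 1
    · refine sum_congr rfl fun j _ => ?_
      rcases j with _ | j
      · simp
      · rw [Nat.add_sub_cancel, pow_succ ζ]; ring
    · refine sum_congr rfl fun l _ => ?_
      rw [pow_succ ζ⁻¹]
      have : ζ * (ζ ^ 2)⁻¹ = ζ⁻¹ := by field_simp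
      linear_combination (-(ptB q n (l + 1) * (q ^ ((l + 1).choose 2) *
        ((l + 1 : ℕ) * ζ⁻¹ ^ l)))) * this
  rw [← mul_sub, ← mul_add, ← hmul, ← htr ζ hζ, norm_mul, norm_mul (ptQ q n)]
  have n1 : ‖ζ * q ^ (K + 1)‖ = ‖ζ‖ * s ^ (2 * (K + 1)) := by
    rw [norm_mul, norm_pow, hq, ← pow_mul]
  have n2 : ‖ζ * q ^ (K + 1) * ptH q K p ζ‖ ≤
      ‖ζ * q ^ (K + 1) * ptH q K p ζ + (1 + ζ * q ^ (K + 1)) * (ζ * D)‖ +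
      S * ‖(1 + ζ * q ^ (K + 1)) * ptH q K p ζ‖ := by
    have a := norm_sub_le (ζ * q ^ (K + 1) * ptH q K p ζ + (1 + ζ * q ^ (K + 1)) * (ζ * D))
      ((1 + ζ * q ^ (K + 1)) * (ζ * D))
    rw [add_sub_cancel_right] at a
    have b : ‖(1 + ζ * q ^ (K + 1)) * (ζ * D)‖ ≤ S * ‖(1 + ζ * q ^ (K + 1)) * ptH q K p ζ‖ := by
      rw [norm_mul, norm_mul (1 + ζ * q ^ (K + 1))]
      calc _ ≤ ‖1 + ζ * q ^ (K + 1)‖ * (S * ‖ptH q K p ζ‖) := by gcongr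
        _ = _ := by ring
    linarith
  calc s * (s⁻¹ ^ (K ^ 2) * (Real.exp (-4 / (1 - s))) ^ 3)
      = Real.exp (-4 / (1 - s)) * (s * (s⁻¹ ^ (K ^ 2) * (Real.exp (-4 / (1 - s))) ^ 2)) := by ring
    _ ≤ ‖ptQ q n‖ * (‖ζ * q ^ (K + 1)‖ * ‖ptH q K p ζ‖) := by
        rw [n1]; gcongr
    _ ≤ ‖ptQ q n‖ * (‖ζ * q ^ (K + 1) * ptH q K p ζ + (1 + ζ * q ^ (K + 1)) * (ζ * D)‖ +
      S * ‖(1 + ζ * q ^ (K + 1)) * ptH q K p ζ‖) := by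
        rw [← norm_mul]; gcongr
    _ = _ := by ring

lemma pt_exists_K (s X : ℝ) (h0 : 1 / 2 ≤ s) (h1 : s < 1) (hX : 8 ^ 11 < X) :
    ∃ K : ℕ, s ≤ X * s ^ (2 * (K + 1)) ∧ X * s ^ (2 * (K + 1)) * s ≤ 1 := by
  have hs : 0 < s := by linarith
  have hX0 : (0 : ℝ) < X := by norm_num at hX; linarith
  have hex : ∃ k : ℕ, X * s ^ (2 * k) * s ≤ 1 := by
    obtain ⟨k, hk⟩ := exists_pow_lt_of_lt_one (show 0 < 1 / X by positivity) h1
    refine ⟨k, ?_⟩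
    have : s ^ (2 * k) ≤ s ^ k := pow_le_pow_of_le_one hs.le h1.le (by omega)
    have h3 : s ^ (2 * k) ≤ 1 / X := by linarith
    have h4 : X * s ^ (2 * k) ≤ 1 := by
      rw [le_div_iff₀ hX0] at h3; linarith
    have : 0 ≤ X * s ^ (2 * k) := by positivity
    nlinarith
  classical
  have hf := Nat.find_spec hex
  have hm := fun m hm => Nat.find_min (m := m) hex hm
  generalize Nat.find hex = k at hf hm
  rcases k with _ | K
  · simp at hf; norm_num at hX; nlinarith
  · refine ⟨K, ?_, hf⟩
    have h := hm K (by omega)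
    push Not at h
    have e : X * s ^ (2 * (K + 1)) = (X * s ^ (2 * K) * s) * s := by ring
    rw [e]; nlinarith

lemma pt_arith (s X : ℝ) (h0 : 1 / 2 ≤ s) (hs2 : 1 / 2 ≤ s ^ 2) (h1 : s < 1) (hX : 8 ^ 11 < X) (K : ℕ)
    (hy2 : X * s ^ (2 * (K + 1)) * s ≤ 1) :
    1 + (K * (1 / (1 - s)) + 2 * (1 / (1 - s)) ^ 2) <
      s * (s⁻¹ ^ (K ^ 2) * (Real.exp (-4 / (1 - s))) ^ 3) := by
  have hs : 0 < s := by linarith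
  have hs1 : 0 < 1 - s := by linarith
  have hsK : 0 < s ^ K := pow_pos hs K
  have e10 : Real.exp 10 ≤ 2 ^ 15 := by
    have : Real.exp 10 = Real.exp 1 ^ 10 := by rw [← Real.exp_nat_mul]; norm_num
    rw [this]
    have h := Real.exp_one_lt_d9
    calc Real.exp 1 ^ 10 ≤ 2.7182818286 ^ 10 := by gcongr
      _ ≤ 2 ^ 15 := by norm_num
  have a1 : s ^ K ≤ 1 / 2 ^ 15 := by
    have e : X * s ^ (2 * (K + 1)) * s = X * (s ^ K) ^ 2 * (s ^ 2 * s) := by ring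
    rw [e] at hy2
    have h4 : 1 / 4 ≤ s ^ 2 * s := by nlinarith
    by_contra hc
    push Not at hc
    have h5 : (1 / 2 ^ 15) ^ 2 < (s ^ K) ^ 2 := by gcongr
    have h6 : (8 : ℝ) ^ 11 * (1 / 2 ^ 15) ^ 2 < X * (s ^ K) ^ 2 := by gcongr
    norm_num at h6
    nlinarith
  have a2 : (2 : ℝ) ^ 15 ≤ s⁻¹ ^ K := by
    rw [inv_pow]
    rw [le_inv_comm₀ (by positivity) hsK]; rw [← one_div]; exact a1
  have a3 : 10 ≤ K * (s⁻¹ - 1) := by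
    have : s⁻¹ ≤ Real.exp (s⁻¹ - 1) := by have := Real.add_one_le_exp (s⁻¹ - 1); linarith
    have h : Real.exp 10 ≤ Real.exp (K * (s⁻¹ - 1)) := by
      rw [Real.exp_nat_mul]
      exact e10.trans (a2.trans (by gcongr))
    exact Real.exp_le_exp.1 h
  have hK0 : (0 : ℝ) ≤ K := Nat.cast_nonneg K
  have a4 : 10 ≤ 2 * K * (1 - s) := by
    have : s⁻¹ - 1 ≤ 2 * (1 - s) := by
      have : s⁻¹ - 1 = (1 - s) / s := by field_simp
      rw [this, div_le_iff₀ hs]; nlinarith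
    nlinarith
  set v := 1 / (1 - s) with hv
  have hv0 : 0 < v := by positivity
  have a5 : v ≤ K / 5 := by
    rw [hv, div_le_iff₀ hs1]; linarith
  have hK1 : (1 : ℝ) ≤ K := by
    have : K ≠ 0 := by rintro rfl; norm_num at a4
    exact_mod_cast Nat.one_le_iff_ne_zero.2 this
  have b1 : Real.exp (10 * K) ≤ s⁻¹ ^ (K ^ 2) := by
    rw [sq, pow_mul, mul_comm, Real.exp_nat_mul]
    gcongr; exact e10.trans a2
  have b2 : Real.exp (-(12 * K / 5)) ≤ Real.exp (-4 / (1 - s)) ^ 3 := by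
    rw [← Real.exp_nat_mul]
    apply Real.exp_le_exp.2
    have : -4 / (1 - s) = -4 * v := by rw [hv]; ring
    rw [this]; push_cast; linarith
  have b3 : Real.exp (7 * K) ≤ s⁻¹ ^ (K ^ 2) * Real.exp (-4 / (1 - s)) ^ 3 := by
    calc _ ≤ Real.exp (10 * K) * Real.exp (-(12 * K / 5)) := by
          rw [← Real.exp_add]; apply Real.exp_le_exp.2; linarith
      _ ≤ _ := by gcongr
  have b4 := Real.quadratic_le_exp_of_nonneg (x := 7 * K) (by positivity)
  have b5 : K * v + 2 * v ^ 2 ≤ (K : ℝ) ^ 2 := by nlinarith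
  have b6 : 1 / 2 * Real.exp (7 * K) ≤ s * (s⁻¹ ^ (K ^ 2) * Real.exp (-4 / (1 - s)) ^ 3) := by
    gcongr
  nlinarith

lemma pt_tail (q ζ : ℂ) (h1 : ‖q‖ < 1) (hζ : 4 ≤ ‖ζ‖) (c : ℕ → ℂ) (hc : ∀ l, ‖c l‖ ≤ l + 1) :
    Summable (fun l : ℕ => ‖q ^ ((l + 1).choose 2) * (c l * ζ⁻¹ ^ (l + 1))‖) ∧
    ‖∑' l : ℕ, q ^ ((l + 1).choose 2) * (c l * ζ⁻¹ ^ (l + 1))‖ ≤ 1 := by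
  have hb : ∀ l : ℕ, ‖q ^ ((l + 1).choose 2) * (c l * ζ⁻¹ ^ (l + 1))‖ ≤ 1 / 2 / 2 ^ l := by
    intro l
    rw [norm_mul, norm_mul, norm_pow, norm_pow, norm_inv]
    have h2 : (l : ℝ) + 1 ≤ 2 ^ (l + 1) := by exact_mod_cast Nat.lt_two_pow_self.le
    have h3 : ‖ζ‖⁻¹ ≤ 1 / 4 := by
      rw [one_div]; gcongr
    have h4 : ‖q‖ ^ ((l + 1).choose 2) ≤ 1 := pow_le_one₀ (norm_nonneg _) h1.le
    calc ‖q‖ ^ ((l + 1).choose 2) * (‖c l‖ * ‖ζ‖⁻¹ ^ (l + 1))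
        ≤ 1 * (2 ^ (l + 1) * (1 / 4) ^ (l + 1)) := by
          gcongr; exact (hc l).trans h2
      _ = 1 / 2 / 2 ^ l := by
          rw [one_mul, ← mul_pow, pow_succ]; norm_num [div_eq_mul_inv, mul_comm]
          rw [one_div, inv_pow]
  have hs := hasSum_geometric_two' (1 : ℝ)
  exact ⟨Summable.of_nonneg_of_le (fun _ => norm_nonneg _) hb hs.summable,
    tsum_of_norm_bounded hs hb⟩

/-- For `1/2 ≤ |q| < 1` the partial theta function `θ(q,·)` has no multiple zero `ζ` with
`|ζ| > 8^11`. -/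
theorem no_large_multiple_zero_large_q (q : ℂ) (hq1 : 1 / 2 ≤ ‖q‖) (hq2 : ‖q‖ < 1) :
    ¬ ∃ ζ : ℂ, (8 : ℝ) ^ 11 < ‖ζ‖ ∧
      (∑' j : ℕ, q ^ (j * (j + 1) / 2) * ζ ^ j = 0) ∧
      deriv (fun x : ℂ => ∑' j : ℕ, q ^ (j * (j + 1) / 2) * x ^ j) ζ = 0 := by
  rintro ⟨ζ, hX, hz, hd⟩
  have hc : ∀ j : ℕ, j * (j + 1) / 2 = (j + 1).choose 2 := fun j => by
    rw [Nat.choose_two_right, Nat.add_sub_cancel, mul_comm]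
  simp only [hc] at hz hd
  have hr0 : 0 < ‖q‖ := by linarith
  have hq0 : q ≠ 0 := norm_pos_iff.1 hr0
  have hX4 : 4 ≤ ‖ζ‖ := by norm_num at hX; linarith
  have hζ : ζ ≠ 0 := by rw [← norm_pos_iff]; linarith
  rw [(pt_hasDeriv q hq0 hq2 ζ).deriv] at hd
  set s := √‖q‖ with hs
  have hs2 : ‖q‖ = s ^ 2 := (Real.sq_sqrt hr0.le).symm
  have hs0 : 0 < s := Real.sqrt_pos.2 hr0
  have hs1 : s < 1 := by nlinarith
  have hsh : 1 / 2 ≤ s := by nlinarith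
  obtain ⟨K, hy1, hy2⟩ := pt_exists_K s ‖ζ‖ hsh hs1 hX
  have hζp : 0 < ‖ζ‖ := by linarith
  have S1 : Summable fun j : ℕ => ‖q ^ ((j + 1).choose 2) * ((j : ℂ) * ζ ^ j)‖ := by
    refine (pt_summable' ‖q‖ ‖ζ‖ hr0 hq2 hζp).congr fun j => ?_
    rw [norm_mul, norm_mul, norm_pow, norm_pow, Complex.norm_natCast]; ring
  have S3 : Summable fun j : ℕ => ‖q ^ ((j + 1).choose 2) * ζ ^ j‖ := by
    refine (pt_summable ‖q‖ ‖ζ‖ hr0 hq2 hζp).congr fun j => ?_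
    rw [norm_mul, norm_pow, norm_pow]
  have T2 := pt_tail q ζ hq2 hX4 (fun l => ((l + 1 : ℕ) : ℂ)) fun l => by
    rw [Complex.norm_natCast]; push_cast; rfl
  have T4 := pt_tail q ζ hq2 hX4 (fun _ => 1) fun l => by simp
  simp only [one_mul] at T4
  have z1 : ∑' j : ℕ, q ^ ((j + 1).choose 2) * ((j : ℂ) * ζ ^ j) = 0 := by
    have : ∀ j : ℕ, q ^ ((j + 1).choose 2) * ((j : ℂ) * ζ ^ j) =
        ζ * (q ^ ((j + 1).choose 2) * ((j : ℂ) * ζ ^ (j - 1))) := by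
      intro j
      rcases j with _ | j
      · simp
      · rw [Nat.add_sub_cancel, pow_succ ζ]; ring
    simp_rw [this]
    rw [tsum_mul_left, hd, mul_zero]
  have L1 := pt_lim q hq2 _ S1
  have L2 := pt_lim' q hq2 _ T2.1
  have L3 := pt_lim q hq2 _ S3
  have L4 := pt_lim' q hq2 _ T4.1
  rw [z1] at L1
  rw [hz] at L3
  have hlim := ((L1.sub L2).norm).add
    (((L3.add L4).norm).const_mul (K * (1 / (1 - s)) + 2 * (1 / (1 - s)) ^ 2))
  have hge : s * (s⁻¹ ^ (K ^ 2) * (Real.exp (-4 / (1 - s))) ^ 3) ≤ _ := ge_of_tendsto hlim (by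
    filter_upwards [eventually_ge_atTop (K + 1)] with n hn
    exact pt_fin q ζ s hs0 hs1 hs2 K (n - (K + 1)) hy1 hy2 hζ n (by omega))
  have har := pt_arith s ‖ζ‖ hsh (by linarith) hs1 hX K hy2
  rw [zero_sub, zero_add, norm_neg] at hge
  have hv : 0 < 1 / (1 - s) := by have : 0 < 1 - s := by linarith
                                  positivity
  have hS : 0 ≤ K * (1 / (1 - s)) + 2 * (1 / (1 - s)) ^ 2 := by positivity
  have := mul_le_mul_of_nonneg_left T4.2 hS
  have := T2.2
  linarith
end
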